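/- Suppose that p = p(n) satisfies p = log^{-o(1)} n (for example, p constant). Then for each vertex v of G(n,p), asymptotically almost surely pt_pzf(G(n,p), v) = (1+o(1)) log₂ log₂ n. -/

import Mathlib

open Finset Filter Real
open scoped Classical

namespace PZF

variable {V : Type*} [Fintype V] [DecidableEq V]

/-- The closed degree of `u` into the set `B`, i.e. `|N[u] ∩ B|`. -/
noncomputable def closedDegIn (G : SimpleGraph V) (B : Finset V) (u : V) : ℕ :=
  ((insert u (G.neighborSet u)) ∩ (B : Set V)).ncard

/-- The degree of `u` in `G`. -/
noncomputable def deg (G : SimpleGraph V) (u : V) : ℕ :=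
  (G.neighborSet u).ncard

/-- The probability that the blue vertex `u` forces its white neighbour `v` in one round of
probabilistic zero forcing, when the current blue set is `B`: it equals `|N[u] ∩ B| / deg u`
when `u` is blue, `v` is a white neighbour of `u`, and `0` otherwise. -/
noncomputable def edgeForceProb (G : SimpleGraph V) (B : Finset V) (u v : V) : ℝ :=
  if G.Adj u v ∧ u ∈ B ∧ v ∉ B then (closedDegIn G B u : ℝ) / (deg G u : ℝ) else 0

/-- Given per-ordered-pair forcing probabilities `q u v` (each attempt independent), the
probability that one round starting from the blue set `B` produces exactly the blue set `B'`. -/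
noncomputable def stepOfQ (q : V → V → ℝ) (B B' : Finset V) : ℝ :=
  if B ⊆ B' then
    (∏ v ∈ B' \ B, (1 - ∏ u ∈ B, (1 - q u v))) * ∏ v ∈ B'ᶜ, ∏ u ∈ B, (1 - q u v)
  else 0

/-- The transition rule of standard probabilistic zero forcing, as a function of the history
(the list of blue sets so far; only the current blue set matters). -/
noncomputable def stdStep (G : SimpleGraph V) (hist : List (Finset V)) (B' : Finset V) : ℝ :=
  stepOfQ (edgeForceProb G (hist.getLastD ∅)) (hist.getLastD ∅) B'

/-- Probability of a given future trajectory, given the history so far. -/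
noncomputable def seqProbAux (step : List (Finset V) → Finset V → ℝ) :
    List (Finset V) → List (Finset V) → ℝ
  | _, [] => 1
  | hist, B :: rest => step hist B * seqProbAux step (hist ++ [B]) rest

/-- The probability that, running the process given by the transition rule `step` from the
initial blue set `S` for `ℓ` rounds, the resulting trajectory (including the initial set)
satisfies the predicate `E`. -/
noncomputable def trajEventProb (step : List (Finset V) → Finset V → ℝ) (S : Finset V)
    (ℓ : ℕ) (E : List (Finset V) → Prop) : ℝ :=
  ∑ f : Fin ℓ → Finset V,
    if E (S :: List.ofFn f) then seqProbAux step [S] (List.ofFn f) else 0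

/-- `P(A(S,T,ℓ))`: the probability that, starting probabilistic zero forcing from the blue
set `S`, after `ℓ` rounds every vertex of `T` is blue. -/
noncomputable def probForced (G : SimpleGraph V) (S T : Finset V) (ℓ : ℕ) : ℝ :=
  trajEventProb (stdStep G) S ℓ fun traj => T ⊆ traj.getLastD ∅

/-- `P(pt_pzf(G,S) ≤ ℓ)`: the probability that all vertices are blue after `ℓ` rounds. -/
noncomputable def probAllBlue (G : SimpleGraph V) (S : Finset V) (ℓ : ℕ) : ℝ :=
  probForced G S Finset.univ ℓ

/-- The probability of a fixed graph `G` under the Erdős–Rényi measure `G(n,p)`. -/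
noncomputable def erProb (n : ℕ) (p : ℝ) (G : SimpleGraph (Fin n)) : ℝ :=
  p ^ G.edgeSet.ncard * (1 - p) ^ (n.choose 2 - G.edgeSet.ncard)

/-- The probability that `G(n,p)` satisfies the property `E`. -/
noncomputable def graphProb (n : ℕ) (p : ℝ) (E : SimpleGraph (Fin n) → Prop) : ℝ :=
  ∑ G : SimpleGraph (Fin n), if E G then erProb n p G else 0

/-- `P(pt_pzf(G(n,p), v) ≤ ℓ)`: the joint probability (over the random graph and the forcing
randomness) that probabilistic zero forcing started at `{v}` turns all of `G(n,p)` blue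
within `ℓ` rounds. -/
noncomputable def prPZFwithin (n : ℕ) (p : ℝ) (v : Fin n) (ℓ : ℕ) : ℝ :=
  ∑ G : SimpleGraph (Fin n), erProb n p G * probAllBlue G {v} ℓ



set_option linter.unusedSectionVars false

/-! ### Bernoulli random subsets -/

/-- The law of a random subset containing each `v` independently with probability `q v`. -/
noncomputable def bern (q : V → ℝ) (S : Finset V) : ℝ :=
  (∏ v ∈ S, q v) * ∏ v ∈ Sᶜ, (1 - q v)

/-- Expectation with respect to `bern q`. -/
noncomputable def EE (q : V → ℝ) (φ : Finset V → ℝ) : ℝ := ∑ S, bern q S * φ S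

lemma EE_prod (q a b : V → ℝ) :
    EE q (fun S => (∏ v ∈ S, a v) * ∏ v ∈ Sᶜ, b v) = ∏ v, (q v * a v + (1 - q v) * b v) := by
  rw [Fintype.prod_add]
  unfold EE bern
  refine Finset.sum_congr rfl fun S _ => ?_
  rw [Finset.prod_mul_distrib, Finset.prod_mul_distrib]
  ring

lemma EE_one (q : V → ℝ) : EE q (fun _ => 1) = 1 := by
  have := EE_prod q (fun _ => 1) (fun _ => 1)
  simpa using this

lemma bern_nonneg {q : V → ℝ} (h0 : ∀ v, 0 ≤ q v) (h1 : ∀ v, q v ≤ 1) (S : Finset V) :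
    0 ≤ bern q S :=
  mul_nonneg (Finset.prod_nonneg fun v _ => h0 v)
    (Finset.prod_nonneg fun v _ => sub_nonneg.2 (h1 v))

lemma EE_mono {q : V → ℝ} (h0 : ∀ v, 0 ≤ q v) (h1 : ∀ v, q v ≤ 1) {φ ψ : Finset V → ℝ}
    (h : ∀ S, φ S ≤ ψ S) : EE q φ ≤ EE q ψ :=
  Finset.sum_le_sum fun S _ => mul_le_mul_of_nonneg_left (h S) (bern_nonneg h0 h1 S)

lemma EE_add (q : V → ℝ) (φ ψ : Finset V → ℝ) :
    EE q (fun S => φ S + ψ S) = EE q φ + EE q ψ := by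
  simp [EE, mul_add, Finset.sum_add_distrib]

lemma EE_const_mul (q : V → ℝ) (c : ℝ) (φ : Finset V → ℝ) :
    EE q (fun S => c * φ S) = c * EE q φ := by
  simp only [EE, Finset.mul_sum]
  exact Finset.sum_congr rfl fun S _ => by ring

lemma EE_const (q : V → ℝ) (c : ℝ) : EE q (fun _ => c) = c := by
  have := EE_const_mul q c (fun _ => 1)
  simpa [EE_one] using this

lemma EE_sum (q : V → ℝ) {ι : Type*} (s : Finset ι) (φ : ι → Finset V → ℝ) :
    EE q (fun S => ∑ i ∈ s, φ i S) = ∑ i ∈ s, EE q (φ i) := by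
  simp only [EE, Finset.mul_sum]
  rw [Finset.sum_comm]

/-- Mixed moment. -/
lemma EE_mem_pow (q : V → ℝ) (A : Finset V) (x : V) (hx : x ∉ A) (r : ℝ) :
    EE q (fun S => (if x ∈ S then 1 else 0) * r ^ (S ∩ A).card) =
      q x * ∏ v ∈ A, (q v * r + (1 - q v)) := by
  have h := EE_prod q (fun v => if v ∈ A then r else 1) (fun v => if v = x then 0 else 1)
  have e : (fun S : Finset V => (∏ v ∈ S, (if v ∈ A then r else 1)) *
      ∏ v ∈ Sᶜ, (if v = x then (0 : ℝ) else 1)) =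
      fun S => (if x ∈ S then 1 else 0) * r ^ (S ∩ A).card := by
    funext S
    rw [Finset.prod_ite_mem, Finset.prod_const]
    by_cases hxS : x ∈ S
    · rw [if_pos hxS, Finset.prod_eq_one]
      · ring
      · intro v hv
        rw [if_neg]
        rintro rfl
        exact (Finset.mem_compl.1 hv) hxS
    · rw [if_neg hxS, Finset.prod_eq_zero (i := x) (by simpa using hxS) (by simp)]
      ring
  rw [e] at h
  rw [h, ← Finset.mul_prod_erase _ _ (Finset.mem_univ x), if_neg hx]
  simp only [if_true, mul_one, mul_zero, add_zero]
  congr 1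
  symm
  rw [← Finset.prod_subset (s₁ := A) (s₂ := Finset.univ.erase x)]
  · refine Finset.prod_congr rfl fun v hv => ?_
    rw [if_pos hv, if_neg]
    · ring
    · rintro rfl; exact hx hv
  · intro v hv
    simp only [Finset.mem_erase, Finset.mem_univ, and_true]
    rintro rfl; exact hx hv
  · intro v hv hvA
    rw [if_neg hvA, if_neg (Finset.ne_of_mem_erase hv)]
    ring

lemma EE_pow (q : V → ℝ) (A : Finset V) (r : ℝ) :
    EE q (fun S => r ^ (S ∩ A).card) = ∏ v ∈ A, (q v * r + (1 - q v)) := by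
  have h := EE_prod q (fun v => if v ∈ A then r else 1) (fun v => 1)
  have e : (fun S : Finset V => (∏ v ∈ S, (if v ∈ A then r else 1)) *
      ∏ v ∈ Sᶜ, (1 : ℝ)) = fun S => r ^ (S ∩ A).card := by
    funext S
    rw [Finset.prod_ite_mem, Finset.prod_const]
    simp
  rw [e] at h
  rw [h]
  symm
  rw [← Finset.prod_subset (s₁ := A) (Finset.subset_univ _)]
  · refine Finset.prod_congr rfl fun v hv => ?_
    rw [if_pos hv]; ring
  · intro v _ hvA
    rw [if_neg hvA]; ring

lemma EE_mem (q : V → ℝ) (x : V) :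
    EE q (fun S => (if x ∈ S then 1 else 0)) = q x := by
  have := EE_mem_pow q ∅ x (by simp) 1
  simpa using this

lemma EE_card (q : V → ℝ) : EE q (fun S => (S.card : ℝ)) = ∑ v, q v := by
  have := EE_sum q Finset.univ (fun (v : V) S => (if v ∈ S then (1 : ℝ) else 0))
  simp only [EE_mem] at this
  rw [← this]
  congr 1
  funext S
  simp

lemma exp_neg_one_le : Real.exp (-1) ≤ 3 / 8 := by
  rw [Real.exp_neg, inv_le_comm₀ (Real.exp_pos _) (by norm_num)]
  have := Real.exp_one_gt_d9
  norm_num at *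
  linarith

lemma prod_exp_bound {q : V → ℝ} (h0 : ∀ v, 0 ≤ q v) (h1 : ∀ v, q v ≤ 1) (A : Finset V) {m : ℝ}
    (hm : m ≤ ∑ v ∈ A, q v) :
    ∏ v ∈ A, (q v * Real.exp (-1) + (1 - q v)) ≤ Real.exp (-(5 / 8) * m) := by
  calc _ ≤ ∏ v ∈ A, Real.exp (-(5/8) * q v) := by
        refine Finset.prod_le_prod (fun v _ => ?_) (fun v _ => ?_)
        · have := mul_nonneg (h0 v) (Real.exp_pos (-1)).le
          linarith [h1 v]
        · have h2 := Real.add_one_le_exp (-(5/8) * q v)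
          have h3 := mul_le_mul_of_nonneg_left exp_neg_one_le (h0 v)
          linarith
    _ = Real.exp (-(5/8) * ∑ v ∈ A, q v) := by
        rw [← Real.exp_sum, Finset.mul_sum]
    _ ≤ _ := Real.exp_le_exp.2 (by linarith)

lemma ind_le_exp (k : ℕ) (m : ℝ) :
    (if (k : ℝ) < m / 4 then (1 : ℝ) else 0) ≤ Real.exp (m / 4) * Real.exp (-1) ^ k := by
  split_ifs with h
  · rw [← Real.exp_nat_mul, ← Real.exp_add]
    exact Real.one_le_exp (by linarith)
  · positivity

/-- Chernoff lower tail. -/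
lemma EE_chernoff {q : V → ℝ} (h0 : ∀ v, 0 ≤ q v) (h1 : ∀ v, q v ≤ 1) (A : Finset V) {m : ℝ}
    (hm : m ≤ ∑ v ∈ A, q v) :
    EE q (fun S => if ((S ∩ A).card : ℝ) < m / 4 then 1 else 0) ≤ Real.exp (-(3 / 8) * m) := by
  calc _ ≤ EE q (fun S => Real.exp (m / 4) * Real.exp (-1) ^ (S ∩ A).card) :=
        EE_mono h0 h1 fun S => ind_le_exp _ _
    _ = Real.exp (m / 4) * ∏ v ∈ A, (q v * Real.exp (-1) + (1 - q v)) := by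
        rw [EE_const_mul, EE_pow]
    _ ≤ Real.exp (m / 4) * Real.exp (-(5 / 8) * m) :=
        mul_le_mul_of_nonneg_left (prod_exp_bound h0 h1 A hm) (Real.exp_pos _).le
    _ = _ := by rw [← Real.exp_add]; congr 1; ring

lemma EE_chernoff_mem {q : V → ℝ} (h0 : ∀ v, 0 ≤ q v) (h1 : ∀ v, q v ≤ 1) (A : Finset V) {m : ℝ}
    (hm : m ≤ ∑ v ∈ A, q v) (x : V) (hx : x ∉ A) :
    EE q (fun S => (if x ∈ S then 1 else 0) * (if ((S ∩ A).card : ℝ) < m / 4 then 1 else 0)) ≤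
      q x * Real.exp (-(3 / 8) * m) := by
  calc _ ≤ EE q (fun S => Real.exp (m / 4) *
          ((if x ∈ S then 1 else 0) * Real.exp (-1) ^ (S ∩ A).card)) := by
        refine EE_mono h0 h1 fun S => ?_
        rw [mul_left_comm]
        exact mul_le_mul_of_nonneg_left (ind_le_exp _ _) (by split_ifs <;> norm_num)
    _ = Real.exp (m / 4) * (q x * ∏ v ∈ A, (q v * Real.exp (-1) + (1 - q v))) := by
        rw [EE_const_mul, EE_mem_pow _ _ _ hx]
    _ ≤ Real.exp (m / 4) * (q x * Real.exp (-(5 / 8) * m)) := by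
        gcongr
        · exact h0 x
        · exact prod_exp_bound h0 h1 A hm
    _ = q x * (Real.exp (m / 4) * Real.exp (-(5 / 8) * m)) := by ring
    _ = _ := by rw [← Real.exp_add]; congr 2; ring

/-! ### The one-step operator -/

/-- Probability that `w` is blue after one round from blue set `B`. -/
noncomputable def fq (G : SimpleGraph V) (B : Finset V) (w : V) : ℝ :=
  if w ∈ B then 1 else 1 - ∏ u ∈ B, (1 - edgeForceProb G B u w)

lemma step_eq (G : SimpleGraph V) (B B' : Finset V) :
    stepOfQ (edgeForceProb G B) B B' = bern (fq G B) B' := by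
  unfold stepOfQ bern
  split_ifs with h
  · congr 1
    · rw [← Finset.prod_sdiff h]
      have : ∏ v ∈ B, fq G B v = 1 := Finset.prod_eq_one fun v hv => by simp [fq, hv]
      rw [this, mul_one]
      refine Finset.prod_congr rfl fun v hv => ?_
      rw [fq, if_neg (Finset.mem_sdiff.1 hv).2]
    · refine Finset.prod_congr rfl fun v hv => ?_
      rw [fq, if_neg fun hB => (Finset.mem_compl.1 hv) (h hB)]
      ring
  · obtain ⟨x, hx, hx'⟩ := Finset.not_subset.1 h
    rw [Finset.prod_eq_zero (s := B'ᶜ) (i := x) (by simpa using hx') (by simp [fq, hx])]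
    ring

/-- One-step operator. -/
noncomputable def PP (G : SimpleGraph V) (φ : Finset V → ℝ) (B : Finset V) : ℝ :=
  EE (fq G B) φ

lemma traj_sum (G : SimpleGraph V) (φ : Finset V → ℝ) (ℓ : ℕ) :
    ∀ (hist : List (Finset V)) (S : Finset V), hist.getLastD ∅ = S →
    ∑ f : Fin ℓ → Finset V, φ ((S :: List.ofFn f).getLastD ∅) *
      seqProbAux (stdStep G) hist (List.ofFn f) = (PP G)^[ℓ] φ S := by
  induction ℓ with
  | zero => intro hist S _; simp [seqProbAux]
  | succ ℓ ih =>
    intro hist S hS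
    rw [Function.iterate_succ_apply', ← (Fin.consEquiv (fun _ => Finset V)).sum_comp,
      Fintype.sum_prod_type]
    simp only [PP, EE]
    refine Finset.sum_congr rfl fun B' _ => ?_
    rw [← ih (hist ++ [B']) B' (by simp), Finset.mul_sum]
    refine Finset.sum_congr rfl fun f _ => ?_
    have : List.ofFn ((Fin.consEquiv (fun _ => Finset V)) (B', f)) = B' :: List.ofFn f := by
      simp [Fin.consEquiv, List.ofFn_succ]
    rw [this, seqProbAux, stdStep, hS, step_eq]
    simp only [List.getLastD_cons]
    ring

lemma probAllBlue_eq (G : SimpleGraph V) (S : Finset V) (ℓ : ℕ) :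
    probAllBlue G S ℓ = (PP G)^[ℓ] (fun B => if B = Finset.univ then 1 else 0) S := by
  rw [← traj_sum G _ ℓ [S] S rfl]
  unfold probAllBlue probForced trajEventProb
  refine Finset.sum_congr rfl fun f _ => ?_
  simp only [Finset.univ_subset_iff]
  split_ifs <;> simp


lemma PP_mono_sup (G : SimpleGraph V) (B : Finset V) {φ ψ : Finset V → ℝ}
    (h01 : ∀ v, 0 ≤ fq G B v ∧ fq G B v ≤ 1)
    (h : ∀ S, B ⊆ S → φ S ≤ ψ S) : PP G φ B ≤ PP G ψ B := by
  refine Finset.sum_le_sum fun S _ => ?_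
  by_cases hS : B ⊆ S
  · exact mul_le_mul_of_nonneg_left (h S hS)
      (bern_nonneg (fun v => (h01 v).1) (fun v => (h01 v).2) S)
  · rw [← step_eq, stepOfQ, if_neg hS]; simp

/-- Neighbourhood as a finset. -/
noncomputable def nb (G : SimpleGraph V) (x : V) : Finset V := Finset.univ.filter (G.Adj x)

lemma mem_nb (G : SimpleGraph V) (x y : V) : y ∈ nb G x ↔ G.Adj x y := by simp [nb]

lemma deg_eq (G : SimpleGraph V) (x : V) : deg G x = (nb G x).card := by
  rw [deg, ← Set.ncard_coe_finset]
  congr 1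
  ext y; simp [nb]

lemma closedDegIn_eq (G : SimpleGraph V) (B : Finset V) (u : V) :
    closedDegIn G B u = ((insert u (nb G u)) ∩ B).card := by
  rw [closedDegIn, ← Set.ncard_coe_finset]
  congr 1
  ext y; simp [nb]

lemma closedDegIn_mono (G : SimpleGraph V) {B S : Finset V} (h : B ⊆ S) (u : V) :
    closedDegIn G B u ≤ closedDegIn G S u := by
  rw [closedDegIn_eq, closedDegIn_eq]
  exact Finset.card_le_card (Finset.inter_subset_inter_left h)

lemma closedDegIn_pos (G : SimpleGraph V) {B : Finset V} {u : V} (hu : u ∈ B) :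
    1 ≤ closedDegIn G B u := by
  rw [closedDegIn_eq]
  exact Finset.card_pos.2 ⟨u, by simp [hu]⟩

lemma closedDegIn_le_card (G : SimpleGraph V) (B : Finset V) (u : V) :
    closedDegIn G B u ≤ B.card := by
  rw [closedDegIn_eq]
  exact Finset.card_le_card Finset.inter_subset_right

lemma inter_nb_le (G : SimpleGraph V) (B : Finset V) (u : V) :
    (B ∩ nb G u).card ≤ closedDegIn G B u := by
  rw [closedDegIn_eq]
  refine Finset.card_le_card fun x hx => ?_
  simp only [Finset.mem_inter, Finset.mem_insert] at *
  exact ⟨Or.inr hx.2, hx.1⟩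

lemma closedDegIn_le_deg (G : SimpleGraph V) {B : Finset V} {u v : V} (huv : G.Adj u v)
    (hv : v ∉ B) : closedDegIn G B u ≤ deg G u := by
  rw [closedDegIn_eq, deg_eq]
  have h1 : insert u (nb G u) ∩ B ⊆ insert u ((nb G u).erase v) := by
    intro x hx
    simp only [Finset.mem_inter, Finset.mem_insert, Finset.mem_erase] at *
    rcases hx with ⟨rfl | h, hB⟩
    · exact Or.inl rfl
    · exact Or.inr ⟨fun e => hv (e ▸ hB), h⟩
  have h2 := Finset.card_le_card h1
  have h3 := Finset.card_insert_le u ((nb G u).erase v)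
  have h4 := Finset.card_erase_add_one ((mem_nb G u v).2 huv)
  omega

lemma efp_nonneg (G : SimpleGraph V) (B : Finset V) (u v : V) : 0 ≤ edgeForceProb G B u v := by
  unfold edgeForceProb
  split_ifs <;> positivity

lemma efp_le_one (G : SimpleGraph V) (B : Finset V) (u v : V) : edgeForceProb G B u v ≤ 1 := by
  unfold edgeForceProb
  split_ifs with h
  · exact div_le_one_of_le₀ (by exact_mod_cast closedDegIn_le_deg G h.1 h.2.2) (by positivity)
  · norm_num

lemma fq_prop (G : SimpleGraph V) (B : Finset V) (w : V) : 0 ≤ fq G B w ∧ fq G B w ≤ 1 := by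
  unfold fq
  split_ifs
  · norm_num
  · have h1 : ∏ u ∈ B, (1 - edgeForceProb G B u w) ≤ 1 :=
      Finset.prod_le_one (fun u _ => sub_nonneg.2 (efp_le_one G B u w))
        (fun u _ => by linarith [efp_nonneg G B u w])
    have h2 : 0 ≤ ∏ u ∈ B, (1 - edgeForceProb G B u w) :=
      Finset.prod_nonneg (fun u _ => sub_nonneg.2 (efp_le_one G B u w))
    constructor <;> linarith

lemma iter_mono_sup (G : SimpleGraph V) (t : ℕ) : ∀ (B : Finset V) {φ ψ : Finset V → ℝ},
    (∀ S, B ⊆ S → φ S ≤ ψ S) → (PP G)^[t] φ B ≤ (PP G)^[t] ψ B := by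
  induction t with
  | zero => intro B φ ψ h; exact h B (Finset.Subset.refl _)
  | succ t ih =>
    intro B φ ψ h
    rw [Function.iterate_succ_apply', Function.iterate_succ_apply']
    exact PP_mono_sup G B (fq_prop G B) fun S hS => ih S fun S' hS' => h S' (hS.trans hS')

lemma iter_const (G : SimpleGraph V) (t : ℕ) (c : ℝ) : ∀ B, (PP G)^[t] (fun _ => c) B = c := by
  induction t with
  | zero => intro B; rfl
  | succ t ih =>
    intro B
    rw [Function.iterate_succ_apply', funext ih]
    exact EE_const _ _

lemma iter_add (G : SimpleGraph V) (t : ℕ) (φ ψ : Finset V → ℝ) :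
    ∀ B, (PP G)^[t] (fun S => φ S + ψ S) B = (PP G)^[t] φ B + (PP G)^[t] ψ B := by
  induction t with
  | zero => intro B; rfl
  | succ t ih =>
    intro B
    rw [Function.iterate_succ_apply', Function.iterate_succ_apply', Function.iterate_succ_apply',
      funext ih]
    exact EE_add _ _ _

lemma iter_const_mul (G : SimpleGraph V) (t : ℕ) (c : ℝ) (φ : Finset V → ℝ) :
    ∀ B, (PP G)^[t] (fun S => c * φ S) B = c * (PP G)^[t] φ B := by
  induction t with
  | zero => intro B; rfl
  | succ t ih =>
    intro B
    rw [Function.iterate_succ_apply', Function.iterate_succ_apply', funext ih]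
    exact EE_const_mul _ _ _

/-- Composition of phases. -/
lemma iter_split (G : SimpleGraph V) (t : ℕ) (B : Finset V) (φ : Finset V → ℝ)
    (P : Finset V → Prop) (ε : ℝ) (hε : 0 ≤ ε) (h1 : ∀ S, φ S ≤ 1) (h2 : ∀ S, P S → φ S ≤ ε) :
    (PP G)^[t] φ B ≤ (PP G)^[t] (fun S => if P S then 0 else 1) B + ε := by
  have := iter_mono_sup G t B (φ := φ) (ψ := fun S => (if P S then 0 else 1) + ε) (fun S _ => by
    split_ifs with h
    · simpa using h2 S h
    · linarith [h1 S])
  rw [iter_add, iter_const] at this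
  exact this

lemma iter_le_one (G : SimpleGraph V) (t : ℕ) (B : Finset V) (φ : Finset V → ℝ)
    (h1 : ∀ S, φ S ≤ 1) : (PP G)^[t] φ B ≤ 1 := by
  have := iter_mono_sup G t B (φ := φ) (ψ := fun _ => 1) (fun S _ => h1 S)
  rwa [iter_const] at this

lemma iter_nonneg (G : SimpleGraph V) (t : ℕ) (B : Finset V) (φ : Finset V → ℝ)
    (h1 : ∀ S, 0 ≤ φ S) : 0 ≤ (PP G)^[t] φ B := by
  have := iter_mono_sup G t B (ψ := φ) (φ := fun _ => 0) (fun S _ => h1 S)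
  rwa [iter_const] at this

lemma probAllBlue_nonneg (G : SimpleGraph V) (S : Finset V) (ℓ : ℕ) : 0 ≤ probAllBlue G S ℓ := by
  rw [probAllBlue_eq]
  exact iter_nonneg _ _ _ _ fun S => by split_ifs <;> norm_num

lemma probAllBlue_le_one (G : SimpleGraph V) (S : Finset V) (ℓ : ℕ) : probAllBlue G S ℓ ≤ 1 := by
  rw [probAllBlue_eq]
  exact iter_le_one _ _ _ _ fun S => by split_ifs <;> norm_num

lemma probAllBlue_compl (G : SimpleGraph V) (S : Finset V) (ℓ : ℕ) :
    1 - probAllBlue G S ℓ =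
      (PP G)^[ℓ] (fun B => if B = Finset.univ then 0 else 1) S := by
  have := iter_add G ℓ (fun B => if B = Finset.univ then 1 else 0)
    (fun B => if B = Finset.univ then 0 else 1) S
  have e : (fun S : Finset V => ((if S = Finset.univ then 1 else 0) +
    (if S = Finset.univ then 0 else 1) : ℝ)) = fun _ => 1 := by
    funext S; split_ifs <;> norm_num
  rw [e, iter_const, ← probAllBlue_eq] at this
  linarith

lemma probAllBlue_succ (G : SimpleGraph V) (S : Finset V) (ℓ : ℕ) :
    probAllBlue G S ℓ ≤ probAllBlue G S (ℓ + 1) := by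
  rw [probAllBlue_eq, probAllBlue_eq, Function.iterate_succ_apply]
  refine iter_mono_sup G ℓ S fun B _ => ?_
  split_ifs with h
  · have := PP_mono_sup G B (fq_prop G B) (φ := fun _ => 1)
      (ψ := fun B => if B = Finset.univ then 1 else 0) (fun S hS => by
        rw [h, Finset.univ_subset_iff] at hS; simp [hS])
    exact (EE_const _ _).symm.le.trans this
  · exact iter_nonneg G 1 B _ fun S => by split_ifs <;> norm_num

lemma probAllBlue_mono (G : SimpleGraph V) (S : Finset V) : Monotone (probAllBlue G S) :=
  monotone_nat_of_le_succ (probAllBlue_succ G S)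

/-- Total closed degree of the blue set. -/
noncomputable def FF (G : SimpleGraph V) (B : Finset V) : ℝ := ∑ u ∈ B, (closedDegIn G B u : ℝ)

lemma card_le_FF (G : SimpleGraph V) (B : Finset V) : (B.card : ℝ) ≤ FF G B := by
  unfold FF
  rw [Finset.card_eq_sum_ones]
  push_cast
  exact Finset.sum_le_sum fun u hu => by exact_mod_cast closedDegIn_pos G hu

lemma FF_le_sq (G : SimpleGraph V) (B : Finset V) : FF G B ≤ (B.card : ℝ) ^ 2 := by
  calc FF G B ≤ ∑ u ∈ B, (B.card : ℝ) :=
        Finset.sum_le_sum fun u _ => by exact_mod_cast closedDegIn_le_card G B u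
    _ = _ := by simp [sq]

lemma one_sub_prod_le {ι : Type*} (s : Finset ι) (a : ι → ℝ) (h0 : ∀ i, 0 ≤ a i)
    (h1 : ∀ i, a i ≤ 1) : 1 - ∏ i ∈ s, (1 - a i) ≤ ∑ i ∈ s, a i := by
  induction s using Finset.induction_on with
  | empty => simp
  | insert i s hi ih =>
    rw [Finset.prod_insert hi, Finset.sum_insert hi]
    have : ∏ i ∈ s, (1 - a i) ≤ 1 :=
      Finset.prod_le_one (fun u _ => sub_nonneg.2 (h1 u)) (fun u _ => by linarith [h0 u])
    nlinarith [h0 i]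

lemma sum_efp_le (G : SimpleGraph V) (B : Finset V) (u : V) :
    ∑ w, edgeForceProb G B u w ≤ closedDegIn G B u := by
  calc _ ≤ ∑ w, (if w ∈ nb G u then (closedDegIn G B u : ℝ) / deg G u else 0) := by
        refine Finset.sum_le_sum fun w _ => ?_
        unfold edgeForceProb
        split_ifs with h1 h2 h2
        · exact le_rfl
        · exact absurd ((mem_nb _ _ _).2 h1.1) h2
        · positivity
        · exact le_rfl
    _ = (nb G u).card * ((closedDegIn G B u : ℝ) / deg G u) := by
        rw [← Finset.sum_filter, Finset.sum_const, nsmul_eq_mul]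
        congr 3
        ext; simp
    _ ≤ _ := by
        rw [← deg_eq]
        rcases eq_or_ne (deg G u : ℝ) 0 with h | h
        · rw [h]; simp
        · exact (mul_div_cancel₀ _ h).le

lemma sum_fq_le (G : SimpleGraph V) (B : Finset V) :
    ∑ w, fq G B w ≤ B.card + FF G B := by
  calc _ ≤ ∑ w, ((if w ∈ B then (1 : ℝ) else 0) + ∑ u ∈ B, edgeForceProb G B u w) := by
        refine Finset.sum_le_sum fun w _ => ?_
        unfold fq
        have h2 : 0 ≤ ∑ u ∈ B, edgeForceProb G B u w :=
          Finset.sum_nonneg fun u _ => efp_nonneg G B u w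
        split_ifs
        · linarith
        · linarith [one_sub_prod_le B (fun u => edgeForceProb G B u w)
            (fun u => efp_nonneg G B u w) (fun u => efp_le_one G B u w)]
    _ = B.card + ∑ u ∈ B, ∑ w, edgeForceProb G B u w := by
        rw [Finset.sum_add_distrib, Finset.sum_comm]; simp
    _ ≤ _ := by
        have := Finset.sum_le_sum fun u (_ : u ∈ B) => sum_efp_le G B u
        unfold FF
        linarith

/-- General upper bound on the probability of not being forced. -/
lemma one_sub_fq_le (G : SimpleGraph V) (B : Finset V) (w : V) (hw : w ∉ B) :
    1 - fq G B w ≤ Real.exp (-∑ u ∈ B, edgeForceProb G B u w) := by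
  rw [fq, if_neg hw, sub_sub_cancel, ← Finset.sum_neg_distrib, Real.exp_sum]
  refine Finset.prod_le_prod (fun u _ => sub_nonneg.2 (efp_le_one G B u w)) fun u _ => ?_
  have := Real.add_one_le_exp (-edgeForceProb G B u w)
  linarith

lemma exp_half {s : ℝ} (h0 : 0 ≤ s) (h1 : s ≤ 1) : Real.exp (-s) ≤ 1 - s / 2 := by
  rw [Real.exp_neg]
  have h := Real.add_one_le_exp s
  rw [inv_le_iff_one_le_mul₀ (Real.exp_pos _)]
  nlinarith

/-! ### Lower bound on propagation time -/

lemma PP_log (G : SimpleGraph V) (B : Finset V) (hB : B.Nonempty) :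
    PP G (fun S => Real.log S.card + Real.log 2) B ≤ 2 * (Real.log B.card + Real.log 2) := by
  have hb : (1 : ℝ) ≤ B.card := by exact_mod_cast hB.card_pos
  set a : ℝ := 2 * (B.card : ℝ) ^ 2 with ha
  have ha0 : 0 < a := by positivity
  have key : PP G (fun S => Real.log S.card + Real.log 2) B ≤
      PP G (fun S => a⁻¹ * (S.card : ℝ) + (Real.log a - 1 + Real.log 2)) B := by
    refine PP_mono_sup G B (fq_prop G B) fun S hS => ?_
    have hs : (0 : ℝ) < S.card := by exact_mod_cast (hB.mono hS).card_pos
    have := Real.log_le_sub_one_of_pos (div_pos hs ha0)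
    rw [Real.log_div hs.ne' ha0.ne', div_eq_inv_mul] at this
    linarith
  refine key.trans ?_
  unfold PP
  rw [EE_add, EE_const_mul, EE_card, EE_const]
  have h1 := sum_fq_le G B
  have h2 := FF_le_sq G B
  have h3 : ∑ w, fq G B w ≤ a := by nlinarith
  have h4 : a⁻¹ * ∑ w, fq G B w ≤ 1 := by
    rw [inv_mul_le_iff₀ ha0]; linarith
  have h5 : Real.log a = Real.log 2 + 2 * Real.log B.card := by
    rw [ha, Real.log_mul (by norm_num) (by positivity), Real.log_pow]; norm_num
  linarith

lemma iter_log (G : SimpleGraph V) (t : ℕ) : ∀ (B : Finset V), B.Nonempty →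
    (PP G)^[t] (fun S => Real.log S.card + Real.log 2) B ≤
      2 ^ t * (Real.log B.card + Real.log 2) := by
  induction t with
  | zero => intro B _; simp
  | succ t ih =>
    intro B hB
    rw [Function.iterate_succ_apply']
    calc _ ≤ PP G (fun S => 2 ^ t * (Real.log S.card + Real.log 2)) B :=
          PP_mono_sup G B (fq_prop G B) fun S hS => ih S (hB.mono hS)
      _ = 2 ^ t * PP G (fun S => (Real.log S.card + Real.log 2)) B := EE_const_mul _ _ _
      _ ≤ 2 ^ t * (2 * (Real.log B.card + Real.log 2)) := by
          gcongr; exact PP_log G B hB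
      _ = _ := by ring

lemma probAllBlue_lower (G : SimpleGraph V) (v : V) (ℓ : ℕ) (hV : 2 ≤ Fintype.card V) :
    probAllBlue G {v} ℓ ≤ 2 ^ ℓ / Real.logb 2 (Fintype.card V) := by
  have hn : (2 : ℝ) ≤ Fintype.card V := by exact_mod_cast hV
  have hl2 : 0 < Real.log 2 := Real.log_pos (by norm_num)
  have hln : 0 < Real.log (Fintype.card V) := Real.log_pos (by linarith)
  have h1 := iter_log G ℓ {v} (by simp)
  have h2 : (PP G)^[ℓ] (fun B => Real.log (Fintype.card V) * (if B = Finset.univ then 1 else 0)) {v}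
      ≤ (PP G)^[ℓ] (fun S => Real.log S.card + Real.log 2) {v} := by
    refine iter_mono_sup G ℓ _ fun S _ => ?_
    split_ifs with h
    · rw [h, Finset.card_univ]; linarith
    · have := Real.log_natCast_nonneg S.card
      linarith
  rw [iter_const_mul, ← probAllBlue_eq] at h2
  simp only [Finset.card_singleton, Nat.cast_one, Real.log_one, zero_add] at h1
  rw [Real.logb, div_div_eq_mul_div, le_div_iff₀ hln]
  linarith


/-! ### Upper bound for graphs with large codegrees -/

lemma sum_efp_lower (G : SimpleGraph V) (B : Finset V) (w : V) (hw : w ∉ B) :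
    (∑ u ∈ B ∩ nb G w, (closedDegIn G B u : ℝ)) / Fintype.card V ≤
      ∑ u ∈ B, edgeForceProb G B u w := by
  rw [Finset.sum_div]
  calc _ ≤ ∑ u ∈ B ∩ nb G w, edgeForceProb G B u w := by
        refine Finset.sum_le_sum fun u hu => ?_
        rw [Finset.mem_inter, mem_nb] at hu
        rw [edgeForceProb, if_pos ⟨hu.2.symm, hu.1, hw⟩]
        have hd : 0 < deg G u := by
          rw [deg_eq]; exact Finset.card_pos.2 ⟨w, (mem_nb _ _ _).2 hu.2.symm⟩
        have hd' : deg G u ≤ Fintype.card V := by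
          rw [deg_eq]; exact Finset.card_le_univ _
        gcongr
    _ ≤ _ := Finset.sum_le_sum_of_subset_of_nonneg Finset.inter_subset_left
        fun u _ _ => efp_nonneg G B u w

lemma fq_lower (G : SimpleGraph V) (B : Finset V) (w : V) (θ : ℝ) (h0 : 0 ≤ θ) (h1 : θ ≤ 1)
    (h2 : θ * FF G B ≤ Fintype.card V) :
    θ / (2 * Fintype.card V) * ∑ u ∈ B ∩ nb G w, (closedDegIn G B u : ℝ) ≤ fq G B w := by
  have hn : (0 : ℝ) < Fintype.card V := by
    have : Nonempty V := ⟨w⟩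
    exact_mod_cast Fintype.card_pos
  set X : ℝ := ∑ u ∈ B ∩ nb G w, (closedDegIn G B u : ℝ) with hX
  have hX0 : 0 ≤ X := Finset.sum_nonneg fun _ _ => by positivity
  have hXF : X ≤ FF G B := Finset.sum_le_sum_of_subset_of_nonneg Finset.inter_subset_left
        fun u _ _ => by positivity
  set s : ℝ := θ * X / Fintype.card V with hs
  have hs0 : 0 ≤ s := by positivity
  have hs1 : s ≤ 1 := by
    rw [hs, div_le_one hn]
    exact (mul_le_mul_of_nonneg_left hXF h0).trans h2
  have e : θ / (2 * Fintype.card V) * X = s / 2 := by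
    rw [hs]; field_simp
  rw [e]
  by_cases hw : w ∈ B
  · rw [fq, if_pos hw]; linarith
  · have a1 := one_sub_fq_le G B w hw
    have a2 := sum_efp_lower G B w hw
    have a3 : s ≤ X / Fintype.card V := by
      rw [hs]; gcongr; nlinarith
    have a4 : Real.exp (-∑ u ∈ B, edgeForceProb G B u w) ≤ Real.exp (-s) :=
      Real.exp_le_exp.2 (by linarith)
    have a5 := exp_half hs0 hs1
    linarith

/-- All codegrees (and degrees) are at least `c n`. -/
def Good (G : SimpleGraph V) (c : ℝ) : Prop :=
  ∀ u x, c * Fintype.card V ≤ ((nb G u ∩ nb G x).card : ℝ)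

/-- Truncated total degree. -/
noncomputable def Phi (G : SimpleGraph V) (B : Finset V) : ℝ := min (FF G B) (Fintype.card V)

lemma mean_lower (G : SimpleGraph V) (c : ℝ) (hG : Good G c) (B : Finset V)
    (hB : B.Nonempty) (x : V) :
    c * Phi G B / 2 ≤ ∑ w ∈ nb G x, fq G B w := by
  have hn : (0 : ℝ) < Fintype.card V := by
    have : Nonempty V := ⟨x⟩
    exact_mod_cast Fintype.card_pos
  have hb : (1 : ℝ) ≤ B.card := by exact_mod_cast hB.card_pos
  have hF : 0 < FF G B := by linarith [card_le_FF G B]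
  have hP0 : 0 < Phi G B := lt_min hF hn
  have hPF : Phi G B ≤ FF G B := min_le_left _ _
  have hPn : Phi G B ≤ Fintype.card V := min_le_right _ _
  set θ := Phi G B / FF G B with hθ
  have hθ0 : 0 ≤ θ := by positivity
  have hθ1 : θ ≤ 1 := (div_le_one hF).2 hPF
  have hθF : θ * FF G B = Phi G B := div_mul_cancel₀ _ hF.ne'
  have h1 : ∑ w ∈ nb G x, (θ / (2 * Fintype.card V) *
      ∑ u ∈ B ∩ nb G w, (closedDegIn G B u : ℝ)) ≤ ∑ w ∈ nb G x, fq G B w :=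
    Finset.sum_le_sum fun w _ => fq_lower G B w θ hθ0 hθ1 (by rw [hθF]; exact hPn)
  refine le_trans ?_ h1
  rw [← Finset.mul_sum]
  have h2 : ∑ w ∈ nb G x, ∑ u ∈ B ∩ nb G w, (closedDegIn G B u : ℝ) =
      ∑ u ∈ B, ((nb G u ∩ nb G x).card : ℝ) * closedDegIn G B u := by
    rw [Finset.sum_comm' (s' := fun u => nb G u ∩ nb G x) (t' := B)]
    · simp
    · intro w u
      simp only [Finset.mem_inter, mem_nb]
      constructor
      · rintro ⟨a, b, d⟩; exact ⟨⟨d.symm, a⟩, b⟩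
      · rintro ⟨⟨a, b⟩, d⟩; exact ⟨b, d, a.symm⟩
  have h3 : c * Fintype.card V * FF G B ≤
      ∑ u ∈ B, ((nb G u ∩ nb G x).card : ℝ) * closedDegIn G B u := by
    rw [FF, Finset.mul_sum]
    exact Finset.sum_le_sum fun u _ => mul_le_mul_of_nonneg_right (hG u x) (by positivity)
  rw [h2]
  calc c * Phi G B / 2 = θ / (2 * Fintype.card V) * (c * Fintype.card V * FF G B) := by
        rw [← hθF]; field_simp
    _ ≤ _ := by gcongr

lemma not_mem_nb (G : SimpleGraph V) (x : V) : x ∉ nb G x := by simp [nb]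

lemma chern_exp (c P : ℝ) (hc : 0 ≤ c) (hP : 0 ≤ P) :
    Real.exp (-(3 / 8) * (c * P / 2)) ≤ Real.exp (-(c * P / 8)) :=
  Real.exp_le_exp.2 (by nlinarith [mul_nonneg hc hP])

/-- scaled truncated total degree -/
noncomputable def zz (G : SimpleGraph V) (c : ℝ) (B : Finset V) : ℝ := c ^ 2 * Phi G B / 64

lemma step_bound (G : SimpleGraph V) (c : ℝ) (hc : 0 < c) (hG : Good G c) (B : Finset V)
    (hB : B.Nonempty) :
    PP G (fun S => if min (c ^ 2 * Fintype.card V / 64) (zz G c B ^ 2) ≤ zz G c S then 0 else 1) B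
      ≤ 6 / zz G c B := by
  obtain ⟨x0, hx0⟩ := hB
  have hB : B.Nonempty := ⟨x0, hx0⟩
  have hn : (1 : ℝ) ≤ Fintype.card V := by
    have : Nonempty V := ⟨x0⟩
    exact_mod_cast (Fintype.card_pos : 0 < Fintype.card V)
  have hb : (1 : ℝ) ≤ B.card := by exact_mod_cast hB.card_pos
  have hF : 1 ≤ FF G B := by linarith [card_le_FF G B]
  have hP1 : 1 ≤ Phi G B := le_min hF hn
  set P := Phi G B with hP
  have h0 := fun v => (fq_prop G B v).1
  have h1 := fun v => (fq_prop G B v).2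
  set m := c * P / 2 with hm
  have hmean := fun x => mean_lower G c hG B hB x
  have key : PP G (fun S => if min (c ^ 2 * Fintype.card V / 64) (zz G c B ^ 2) ≤ zz G c S
      then 0 else 1) B ≤
      EE (fq G B) (fun S => (if ((S ∩ nb G x0).card : ℝ) < m / 4 then 1 else 0) +
        ∑ x, (if x ∈ S then 1 else 0) * (if ((S ∩ nb G x).card : ℝ) < m / 4 then 1 else 0)) := by
    refine EE_mono h0 h1 fun S => ?_
    have n1 : (0 : ℝ) ≤ (if ((S ∩ nb G x0).card : ℝ) < m / 4 then 1 else 0) := by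
      split_ifs <;> norm_num
    have n2 : ∀ x : V, (0 : ℝ) ≤ (if x ∈ S then 1 else 0) *
        (if ((S ∩ nb G x).card : ℝ) < m / 4 then 1 else 0) := by
      intro x; split_ifs <;> norm_num
    have n3 : (0 : ℝ) ≤ ∑ x, (if x ∈ S then 1 else 0) *
        (if ((S ∩ nb G x).card : ℝ) < m / 4 then 1 else 0) := Finset.sum_nonneg fun x _ => n2 x
    by_cases e1 : ((S ∩ nb G x0).card : ℝ) < m / 4
    · rw [if_pos e1]
      split_ifs <;> linarith
    by_cases e2 : ∃ x ∈ S, ((S ∩ nb G x).card : ℝ) < m / 4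
    · obtain ⟨x, hxS, hx⟩ := e2
      have := Finset.single_le_sum (fun x _ => n2 x) (Finset.mem_univ x)
      rw [if_pos hxS, if_pos hx] at this
      split_ifs <;> linarith
    push Not at e1 e2
    rw [if_pos]
    · linarith
    have f1 : m / 4 ≤ S.card := e1.trans (by
      exact_mod_cast Finset.card_le_card Finset.inter_subset_left)
    have hm0 : 0 ≤ m / 4 := by positivity
    have f2 : (m / 4) ^ 2 ≤ FF G S := by
      calc (m / 4) ^ 2 ≤ S.card * (m / 4) := by nlinarith
        _ = ∑ x ∈ S, m / 4 := by simp
        _ ≤ FF G S := Finset.sum_le_sum fun x hx => (e2 x hx).trans (by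
            exact_mod_cast inter_nb_le G S x)
    unfold zz
    rw [← hP]
    have f3 : (c ^ 2 * P / 64) ^ 2 = c ^ 2 * (m / 4) ^ 2 / 64 := by rw [hm]; ring
    rw [f3]
    unfold Phi
    rcases le_total (FF G S) (Fintype.card V) with h | h
    · rw [min_eq_left h]
      refine (min_le_right _ _).trans ?_
      gcongr
    · rw [min_eq_right h]
      exact min_le_left _ _
  refine key.trans ?_
  rw [EE_add, EE_sum]
  have g1 := EE_chernoff h0 h1 (nb G x0) (hmean x0)
  have g2 : ∑ x, EE (fq G B) (fun S => (if x ∈ S then 1 else 0) *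
      (if ((S ∩ nb G x).card : ℝ) < m / 4 then 1 else 0)) ≤
      ∑ x, fq G B x * Real.exp (-(3 / 8) * m) :=
    Finset.sum_le_sum fun x _ => EE_chernoff_mem h0 h1 (nb G x) (hmean x) x (not_mem_nb G x)
  rw [← Finset.sum_mul] at g2
  have g3 : ∑ x, fq G B x ≤ 2 * P := by
    have a1 := sum_fq_le G B
    have a2 := card_le_FF G B
    have a3 : ∑ x, fq G B x ≤ Fintype.card V := by
      calc _ ≤ ∑ x : V, (1 : ℝ) := Finset.sum_le_sum fun x _ => h1 x
        _ = _ := by simp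
    rw [hP, Phi]
    rcases le_total (FF G B) (Fintype.card V) with h | h
    · rw [min_eq_left h]; linarith
    · rw [min_eq_right h]; linarith
  have g4 := chern_exp c P hc.le (by linarith)
  rw [← hm] at g4
  have hy : 0 < c * P / 8 := by positivity
  have g5 : Real.exp (-(c * P / 8)) ≤ 2 / (c * P / 8) ^ 2 := by
    rw [Real.exp_neg, inv_le_comm₀ (Real.exp_pos _) (by positivity), inv_div]
    have := Real.quadratic_le_exp_of_nonneg hy.le
    linarith
  have g6 : 0 < Real.exp (-(3 / 8) * m) := Real.exp_pos _
  have g7 : (∑ x, fq G B x) * Real.exp (-(3 / 8) * m) ≤ 2 * P * Real.exp (-(3 / 8) * m) :=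
    mul_le_mul_of_nonneg_right g3 g6.le
  calc _ ≤ Real.exp (-(3 / 8) * m) + 2 * P * Real.exp (-(3 / 8) * m) := by
        linarith only [g1, g2, g7]
    _ ≤ 3 * P * Real.exp (-(3 / 8) * m) := by nlinarith
    _ ≤ 3 * P * (2 / (c * P / 8) ^ 2) := by
        have := g4.trans g5
        gcongr
    _ = 6 / zz G c B := by
        unfold zz
        rw [← hP]
        field_simp
        ring

lemma nonempty_of_zz (G : SimpleGraph V) (c : ℝ) (B : Finset V) (h : 0 < zz G c B) :
    B.Nonempty := by
  rw [Finset.nonempty_iff_ne_empty]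
  rintro rfl
  simp [zz, Phi, FF] at h

lemma phase2 (G : SimpleGraph V) (c : ℝ) (hc : 0 < c) (hG : Good G c) (y0 N : ℝ)
    (hN : N = c ^ 2 * Fintype.card V / 64) (hy0 : 1 ≤ y0) (t : ℕ) :
    ∀ (B : Finset V) (y : ℝ), y0 ≤ y → y ≤ N → y ≤ zz G c B →
    (PP G)^[t] (fun S => if min N (y ^ (2 ^ t)) ≤ zz G c S then 0 else 1) B ≤ 6 * t / y0 := by
  induction t with
  | zero =>
    intro B y h1 h2 h3
    simp [h3]
  | succ t ih =>
    intro B y h1 h2 h3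
    rw [Function.iterate_succ_apply']
    have hB : B.Nonempty := nonempty_of_zz G c B (by linarith)
    have hs := iter_split G 1 B ((PP G)^[t] (fun S => if min N (y ^ (2 ^ (t + 1))) ≤ zz G c S
      then 0 else 1)) (fun S => min (c ^ 2 * Fintype.card V / 64) (zz G c B ^ 2) ≤ zz G c S)
      (6 * t / y0) (by positivity) (fun S => iter_le_one G t S _ fun S => by
        split_ifs <;> norm_num) (by
        intro S hS
        rw [← hN] at hS
        have hy1 : 1 ≤ y := by linarith
        have a1 : min N (y ^ 2) ≤ zz G c S := by
          refine le_trans (min_le_min le_rfl ?_) hS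
          gcongr
        have a2 : y ≤ min N (y ^ 2) := le_min h2 (by nlinarith)
        refine le_trans ?_ (ih S (min N (y ^ 2)) (h1.trans a2) (min_le_left _ _) a1)
        refine iter_mono_sup G t S fun T _ => ?_
        have a3 : min N (y ^ (2 ^ (t + 1))) ≤ min N (min N (y ^ 2) ^ 2 ^ t) := by
          refine le_min (min_le_left _ _) ?_
          rcases le_total N (y ^ 2) with h | h
          · rw [min_eq_left h]
            exact (min_le_left _ _).trans (le_self_pow₀ (by linarith) (by positivity))
          · rw [min_eq_right h, ← pow_mul, ← pow_succ']
            exact min_le_right _ _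
        split_ifs with b1 b2 b2
        · exact le_rfl
        · norm_num
        · exact absurd (a3.trans b2) b1
        · exact le_rfl)
    refine hs.trans ?_
    have hz := step_bound G c hc hG B hB
    have h6 : 6 / zz G c B ≤ 6 / y0 := by gcongr; linarith
    simp only [Function.iterate_one]
    push_cast
    have : 6 * ((t : ℝ) + 1) / y0 = 6 / y0 + 6 * t / y0 := by ring
    linarith

lemma ind_exists_le {ι : Type*} [Fintype ι] (P : ι → Prop) (Q : Prop)
    [DecidablePred P] [Decidable Q] (h : ¬ Q → ∃ i, P i) :
    (if Q then (0 : ℝ) else 1) ≤ ∑ i, if P i then (1 : ℝ) else 0 := by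
  have n : ∀ i, (0 : ℝ) ≤ if P i then (1 : ℝ) else 0 := fun i => by split_ifs <;> norm_num
  split_ifs with hQ
  · exact Finset.sum_nonneg fun i _ => n i
  · obtain ⟨i, hi⟩ := h hQ
    have := Finset.single_le_sum (fun i _ => n i) (Finset.mem_univ i)
    rwa [if_pos hi] at this

lemma phase3 (G : SimpleGraph V) (c : ℝ) (hc : 0 < c) (hG : Good G c) (B : Finset V)
    (hB : B.Nonempty) (hF : (Fintype.card V : ℝ) ≤ FF G B) :
    (PP G)^[2] (fun S => if S = Finset.univ then 0 else 1) B ≤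
      Fintype.card V * Real.exp (-(c * Fintype.card V / 8)) +
      Fintype.card V * Real.exp (-(c ^ 2 * Fintype.card V / 64)) := by
  set n : ℝ := ((Fintype.card V : ℕ) : ℝ) with hn
  have hn0 : 0 < n := by
    obtain ⟨x, _⟩ := hB
    have : Nonempty V := ⟨x⟩
    rw [hn]
    exact_mod_cast (Fintype.card_pos : 0 < Fintype.card V)
  have hP : Phi G B = n := min_eq_right hF
  rw [Function.iterate_succ_apply']
  have hs := iter_split G 1 B ((PP G)^[1] (fun S => if S = Finset.univ then 0 else 1))
    (fun S => ∀ x, c * n / 8 ≤ ((S ∩ nb G x).card : ℝ))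
    (n * Real.exp (-(c ^ 2 * n / 64))) (by positivity)
    (fun S => iter_le_one G 1 S _ fun S => by split_ifs <;> norm_num) (by
      intro S hS
      simp only [Function.iterate_one]
      calc _ ≤ EE (fq G S) (fun T => ∑ w, (1 + (-1) * (if w ∈ T then (1 : ℝ) else 0))) := by
            refine EE_mono (fun v => (fq_prop G S v).1) (fun v => (fq_prop G S v).2) fun T => ?_
            have := ind_exists_le (fun w => w ∉ T) (T = Finset.univ) (by
              intro h
              by_contra hcon
              push Not at hcon
              exact h (Finset.eq_univ_iff_forall.2 hcon))
            refine this.trans (Finset.sum_le_sum fun w _ => ?_)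
            by_cases h : w ∈ T <;> simp [h]
        _ = ∑ w, (1 - fq G S w) := by
            rw [EE_sum]
            refine Finset.sum_congr rfl fun w _ => ?_
            rw [EE_add, EE_const, EE_const_mul, EE_mem]
            ring
        _ ≤ ∑ w : V, Real.exp (-(c ^ 2 * n / 64)) := by
            refine Finset.sum_le_sum fun w _ => ?_
            by_cases hw : w ∈ S
            · rw [fq, if_pos hw]; simp; positivity
            · refine (one_sub_fq_le G S w hw).trans (Real.exp_le_exp.2 (neg_le_neg ?_))
              refine le_trans ?_ (sum_efp_lower G S w hw)
              rw [← hn, le_div_iff₀ hn0]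
              calc c ^ 2 * n / 64 * n = (c * n / 8) * (c * n / 8) := by ring
                _ ≤ ((S ∩ nb G w).card : ℝ) * (c * n / 8) := by
                    have := hS w
                    gcongr
                _ = ∑ u ∈ S ∩ nb G w, c * n / 8 := by simp
                _ ≤ _ := Finset.sum_le_sum fun u _ => (hS u).trans (by
                    exact_mod_cast inter_nb_le G S u)
        _ = _ := by simp [hn])
  refine hs.trans (add_le_add_left ?_ _)
  simp only [Function.iterate_one]
  have hmean := fun x => mean_lower G c hG B hB x
  rw [hP] at hmean
  have h0 := fun v => (fq_prop G B v).1
  have h1 := fun v => (fq_prop G B v).2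
  calc _ ≤ EE (fq G B) (fun T => ∑ x, if ((T ∩ nb G x).card : ℝ) < (c * n / 2) / 4
          then (1 : ℝ) else 0) := by
        refine EE_mono h0 h1 fun T => ?_
        have := ind_exists_le (fun x => ((T ∩ nb G x).card : ℝ) < (c * n / 2) / 4)
          (∀ x, c * n / 8 ≤ ((T ∩ nb G x).card : ℝ)) (by
            intro h
            push Not at h
            obtain ⟨x, hx⟩ := h
            exact ⟨x, by linarith⟩)
        convert this
    _ ≤ ∑ x : V, Real.exp (-(c * n / 8)) := by
        rw [EE_sum]
        exact Finset.sum_le_sum fun x _ => (EE_chernoff h0 h1 (nb G x) (hmean x)).trans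
          (chern_exp c n hc.le hn0.le)
    _ = _ := by simp [hn]

/-! #### First phase -/

/-- potential for phase one -/
noncomputable def psi (G : SimpleGraph V) (v : V) (K : ℝ) (B : Finset V) : ℝ :=
  if K ≤ closedDegIn G B v then 0 else ((closedDegIn G B v : ℝ))⁻¹

lemma psi_step (G : SimpleGraph V) (v : V) (K : ℝ) (hK : 2 * K ≤ deg G v) (B : Finset V)
    (hv : v ∈ B) : PP G (psi G v K) B ≤ 56 / 57 * psi G v K B := by
  have h0 := fun v => (fq_prop G B v).1
  have h1 := fun v => (fq_prop G B v).2
  set k : ℝ := (closedDegIn G B v : ℝ) with hk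
  have hk1 : 1 ≤ k := by rw [hk]; exact_mod_cast closedDegIn_pos G hv
  by_cases hkK : K ≤ k
  · have e : psi G v K B = 0 := by rw [psi, if_pos hkK]
    rw [e, mul_zero]
    have := PP_mono_sup G B (fq_prop G B) (φ := psi G v K) (ψ := fun _ => 0) (fun S hS => by
      rw [psi, if_pos]
      exact hkK.trans (by rw [hk]; exact_mod_cast closedDegIn_mono G hS v))
    exact this.trans (EE_const _ _).le
  · push Not at hkK
    have e : psi G v K B = k⁻¹ := by rw [psi, if_neg (not_le.2 hkK)]
    rw [e]
    set A := nb G v \ B with hA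
    have hcard : closedDegIn G B v + A.card = deg G v + 1 := by
      have e1 : insert v (nb G v) ∩ B = insert v (nb G v ∩ B) := by
        rw [Finset.insert_inter_of_mem hv]
      rw [closedDegIn_eq, e1, Finset.card_insert_of_notMem (by simp [nb]), deg_eq, hA,
        ← Finset.card_inter_add_card_sdiff (nb G v) B]
      omega
    have hcard' : k + A.card = deg G v + 1 := by rw [hk]; exact_mod_cast hcard
    have hdeg : (0 : ℝ) < deg G v := by linarith
    have hmean : k / 2 ≤ ∑ w ∈ A, fq G B w := by
      calc k / 2 ≤ A.card * (k / deg G v) := by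
            rw [mul_div_assoc', div_le_div_iff₀ (by norm_num) hdeg]
            nlinarith
        _ = ∑ w ∈ A, k / deg G v := by simp
        _ ≤ _ := by
            refine Finset.sum_le_sum fun w hw => ?_
            rw [hA, Finset.mem_sdiff, mem_nb] at hw
            have a1 : edgeForceProb G B v w = k / deg G v := by
              rw [edgeForceProb, if_pos ⟨hw.1, hv, hw.2⟩]
            rw [fq, if_neg hw.2, ← Finset.mul_prod_erase _ _ hv, a1]
            have a2 : ∏ u ∈ B.erase v, (1 - edgeForceProb G B u w) ≤ 1 :=
              Finset.prod_le_one (fun u _ => sub_nonneg.2 (efp_le_one G B u w))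
                (fun u _ => by linarith [efp_nonneg G B u w])
            have a3 := efp_le_one G B v w
            rw [a1] at a3
            nlinarith
    have hch := EE_chernoff h0 h1 A hmean
    have hex : Real.exp (-(3 / 8) * (k / 2)) ≤ 16 / 19 := by
      calc _ ≤ Real.exp (-(3 / 16)) := Real.exp_le_exp.2 (by linarith)
        _ ≤ _ := by
          rw [Real.exp_neg, inv_le_comm₀ (Real.exp_pos _) (by norm_num)]
          have := Real.add_one_le_exp (3 / 16 : ℝ)
          norm_num at *
          linarith
    have key : PP G (psi G v K) B ≤ PP G (fun S => k⁻¹ * (8 / 9 + 1 / 9 *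
        (if ((S ∩ A).card : ℝ) < k / 2 / 4 then 1 else 0))) B := by
      refine PP_mono_sup G B (fq_prop G B) fun S hS => ?_
      have hkS : k ≤ closedDegIn G S v := by
        rw [hk]; exact_mod_cast closedDegIn_mono G hS v
      have hpsi : psi G v K S ≤ (closedDegIn G S v : ℝ)⁻¹ := by
        unfold psi
        split_ifs
        · positivity
        · exact le_rfl
      refine hpsi.trans ?_
      split_ifs with hlt
      · norm_num
        exact inv_anti₀ (by linarith) hkS
      · have hsum : closedDegIn G B v + (S ∩ A).card ≤ closedDegIn G S v := by
          rw [closedDegIn_eq, closedDegIn_eq, ← Finset.card_union_of_disjoint]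
          · refine Finset.card_le_card fun x hx => ?_
            simp only [hA, Finset.mem_union, Finset.mem_inter, Finset.mem_insert,
              Finset.mem_sdiff] at *
            rcases hx with ⟨a, b⟩ | ⟨a, b⟩
            · exact ⟨a, hS b⟩
            · exact ⟨Or.inr b.1, a⟩
          · rw [Finset.disjoint_left]
            intro x hx hx'
            simp only [hA, Finset.mem_inter, Finset.mem_sdiff] at hx hx'
            exact hx'.2.2 hx.2
        have hsum' : k + (S ∩ A).card ≤ closedDegIn G S v := by
          rw [hk]; exact_mod_cast hsum
        have : 9 / 8 * k ≤ closedDegIn G S v := by linarith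
        calc _ ≤ (9 / 8 * k)⁻¹ := inv_anti₀ (by linarith) this
          _ = _ := by rw [mul_inv]; ring
    refine key.trans ?_
    unfold PP
    rw [EE_const_mul, EE_add, EE_const, EE_const_mul]
    have hki : 0 < k⁻¹ := by positivity
    have := hch.trans hex
    rw [mul_comm (56 / 57 : ℝ)]
    refine mul_le_mul_of_nonneg_left ?_ hki.le
    linarith

lemma psi_iter (G : SimpleGraph V) (v : V) (K : ℝ) (hK : 2 * K ≤ deg G v) (t : ℕ) :
    ∀ (B : Finset V), v ∈ B → (PP G)^[t] (psi G v K) B ≤ (56 / 57) ^ t * psi G v K B := by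
  induction t with
  | zero => intro B _; simp
  | succ t ih =>
    intro B hB
    rw [Function.iterate_succ_apply']
    calc _ ≤ PP G (fun S => (56 / 57) ^ t * psi G v K S) B :=
          PP_mono_sup G B (fq_prop G B) fun S hS => ih S (hS hB)
      _ = (56 / 57) ^ t * PP G (psi G v K) B := EE_const_mul _ _ _
      _ ≤ (56 / 57) ^ t * (56 / 57 * psi G v K B) := by
          gcongr; exact psi_step G v K hK B hB
      _ = _ := by ring

lemma phase1 (G : SimpleGraph V) (v : V) (K : ℝ) (hK0 : 0 ≤ K) (hK : 2 * K ≤ deg G v) (t : ℕ) :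
    (PP G)^[t] (fun S => if K ≤ FF G S then 0 else 1) {v} ≤ K * (56 / 57) ^ t := by
  calc _ ≤ (PP G)^[t] (fun S => K * psi G v K S) {v} := by
        refine iter_mono_sup G t _ fun S hS => ?_
        have hv : v ∈ S := hS (by simp)
        have hF : (closedDegIn G S v : ℝ) ≤ FF G S :=
          Finset.single_le_sum (f := fun u => (closedDegIn G S u : ℝ))
            (fun _ _ => by positivity) hv
        have hk1 : (1 : ℝ) ≤ closedDegIn G S v := by exact_mod_cast closedDegIn_pos G hv
        unfold psi
        split_ifs with a b b
        · simp
        · positivity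
        · exact absurd (b.trans hF) a
        · rw [← div_eq_mul_inv, one_le_div (by linarith)]; linarith
    _ = K * (PP G)^[t] (psi G v K) {v} := iter_const_mul _ _ _ _ _
    _ ≤ K * ((56 / 57) ^ t * psi G v K {v}) := by
        gcongr; exact psi_iter G v K hK t _ (by simp)
    _ ≤ K * ((56 / 57) ^ t * 1) := by
        have : psi G v K {v} ≤ 1 := by
          unfold psi
          split_ifs
          · norm_num
          · exact inv_le_one_of_one_le₀ (by exact_mod_cast closedDegIn_pos G (by simp))
        gcongr
    _ = _ := by ring

/-- Upper bound on the propagation time for graphs with large codegrees. -/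
lemma upper_det (G : SimpleGraph V) (v : V) (c : ℝ) (hc : 0 < c) (hG : Good G c) (y0 : ℝ)
    (hy0 : 2 ≤ y0) (hK : 128 * y0 ≤ c ^ 3 * Fintype.card V) (hc1 : c ≤ 1)
    (t1 t2 : ℕ) (ht2 : (Fintype.card V : ℝ) ≤ 2 ^ (2 ^ t2)) :
    1 - probAllBlue G {v} (t1 + t2 + 2) ≤
      64 * y0 / c ^ 2 * (56 / 57) ^ t1 + 6 * t2 / y0 +
      (Fintype.card V * Real.exp (-(c * Fintype.card V / 8)) +
      Fintype.card V * Real.exp (-(c ^ 2 * Fintype.card V / 64))) := by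
  set n : ℝ := ((Fintype.card V : ℕ) : ℝ) with hn
  have hn0 : 0 < n := by
    have : Nonempty V := ⟨v⟩
    rw [hn]
    exact_mod_cast (Fintype.card_pos : 0 < Fintype.card V)
  set N : ℝ := c ^ 2 * n / 64 with hN
  have hc3 : c ^ 3 * n ≤ c ^ 2 * n := by
    have : c ^ 3 ≤ c ^ 2 := pow_le_pow_of_le_one hc.le hc1 (by norm_num)
    gcongr
  have hyN : y0 ≤ N := by rw [hN]; linarith
  set ind : Finset V → ℝ := fun S => if S = Finset.univ then 0 else 1 with hind
  set E3 := n * Real.exp (-(c * n / 8)) + n * Real.exp (-(c ^ 2 * n / 64)) with hE3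
  have hE30 : 0 ≤ E3 := by positivity
  have hind1 : ∀ S, ind S ≤ 1 := fun S => by simp only [hind]; split_ifs <;> norm_num
  rw [probAllBlue_compl, Function.iterate_add_apply, Function.iterate_add_apply]
  have s1 := iter_split G t1 {v} ((PP G)^[t2] ((PP G)^[2] ind)) (fun S => 64 * y0 / c ^ 2 ≤ FF G S)
    (6 * t2 / y0 + E3) (by positivity)
    (fun S => by rw [← Function.iterate_add_apply]; exact iter_le_one G _ S _ hind1) (by
      intro S hS
      have hz : y0 ≤ zz G c S := by
        have hPhi : 64 * y0 / c ^ 2 ≤ Phi G S := by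
          refine le_min hS ?_
          rw [div_le_iff₀ (by positivity), ← hn]
          linarith
        rw [zz]
        rw [div_le_iff₀ (by positivity)] at hPhi
        linarith
      have p2 := phase2 G c hc hG y0 N hN (by linarith) t2 S y0 le_rfl hyN hz
      have s2 := iter_split G t2 S ((PP G)^[2] ind) (fun T => min N (y0 ^ 2 ^ t2) ≤ zz G c T)
        E3 hE30 (fun T => iter_le_one G _ T _ hind1) (by
          intro T hT
          have hNle : N ≤ y0 ^ 2 ^ t2 := by
            calc N ≤ n := by
                  rw [hN]
                  have : c ^ 2 ≤ 1 := pow_le_one₀ hc.le hc1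
                  nlinarith
              _ ≤ 2 ^ 2 ^ t2 := ht2
              _ ≤ y0 ^ 2 ^ t2 := by gcongr
          rw [min_eq_left hNle] at hT
          have hTn : T.Nonempty := nonempty_of_zz G c T (by linarith)
          refine phase3 G c hc hG T hTn ?_
          have hh : n ≤ Phi G T := by
            rw [hN, zz] at hT
            have : c ^ 2 * n ≤ c ^ 2 * Phi G T := by linarith
            exact le_of_mul_le_mul_left this (by positivity)
          exact hh.trans (min_le_left _ _))
      linarith)
  have hdeg : 2 * (64 * y0 / c ^ 2) ≤ deg G v := by
    have h1 := hG v v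
    rw [Finset.inter_self, ← deg_eq, ← hn] at h1
    refine le_trans ?_ h1
    rw [mul_div_assoc', div_le_iff₀ (by positivity)]
    nlinarith
  have p1 := phase1 G v (64 * y0 / c ^ 2) (by positivity) hdeg t1
  linarith


/-! ### The random graph -/

lemma erProb_nonneg (n : ℕ) (p : ℝ) (h0 : 0 ≤ p) (h1 : p ≤ 1) (G : SimpleGraph (Fin n)) :
    0 ≤ erProb n p G := by
  unfold erProb
  have : 0 ≤ 1 - p := by linarith
  positivity

lemma er_edges (n : ℕ) (p : ℝ) (D : Finset (Sym2 (Fin n)))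
    (hD : D ⊆ (⊤ : SimpleGraph (Fin n)).edgeFinset) :
    ∑ G : SimpleGraph (Fin n), erProb n p G * (if D ⊆ G.edgeFinset then 1 else 0) =
      p ^ D.card := by
  set M := (⊤ : SimpleGraph (Fin n)).edgeFinset with hM
  have hMc : M.card = n.choose 2 := by
    rw [hM, SimpleGraph.card_edgeFinset_top_eq_card_choose_two, Fintype.card_fin]
  have e1 : ∑ G : SimpleGraph (Fin n), erProb n p G * (if D ⊆ G.edgeFinset then 1 else 0) =
      ∑ S ∈ M.powerset, (p ^ S.card * (1 - p) ^ (M.card - S.card)) * (if D ⊆ S then 1 else 0) := by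
    refine Finset.sum_bij' (fun G _ => G.edgeFinset)
      (fun S _ => SimpleGraph.fromEdgeSet (S : Set (Sym2 (Fin n)))) ?_ ?_ ?_ ?_ ?_
    · intro G _
      rw [Finset.mem_powerset, hM]
      exact SimpleGraph.edgeFinset_mono le_top
    · intro S _; exact Finset.mem_univ _
    · intro G _; simp
    · intro S hS
      rw [Finset.mem_powerset] at hS
      ext e
      simp only [SimpleGraph.mem_edgeFinset, SimpleGraph.edgeSet_fromEdgeSet, Set.mem_sdiff,
        Finset.mem_coe]
      constructor
      · exact fun h => h.1
      · intro h
        refine ⟨h, ?_⟩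
        have := hS h
        rw [hM, SimpleGraph.mem_edgeFinset, SimpleGraph.edgeSet_top] at this
        exact this
    · intro G _
      have : G.edgeSet.ncard = G.edgeFinset.card := by
        rw [← SimpleGraph.coe_edgeFinset, Set.ncard_coe_finset]
      rw [erProb, this, hMc]
  rw [e1]
  have e2 := Finset.prod_add (fun _ : Sym2 (Fin n) => p) (fun e => if e ∈ D then 0 else 1 - p) M
  have e3 : ∏ e ∈ M, (p + if e ∈ D then 0 else 1 - p) = p ^ D.card := by
    have : ∀ e ∈ M, (p + if e ∈ D then 0 else 1 - p) = if e ∈ D then p else 1 := by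
      intro e _; split_ifs <;> ring
    rw [Finset.prod_congr rfl this, Finset.prod_ite_mem, Finset.inter_eq_right.2 hD,
      Finset.prod_const]
  rw [← e3, e2]
  refine Finset.sum_congr rfl fun S hS => ?_
  rw [Finset.mem_powerset] at hS
  rw [Finset.prod_const, mul_assoc]
  congr 1
  split_ifs with h
  · rw [mul_one, ← Finset.card_sdiff_of_subset hS, ← Finset.prod_const]
    refine Finset.prod_congr rfl fun e he => ?_
    rw [if_neg fun hd => (Finset.mem_sdiff.1 he).2 (h hd)]
  · obtain ⟨e, he, he'⟩ := Finset.not_subset.1 h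
    rw [mul_zero, Finset.prod_eq_zero (i := e) (Finset.mem_sdiff.2 ⟨hD he, he'⟩) (by simp [he])]

lemma er_total (n : ℕ) (p : ℝ) : ∑ G : SimpleGraph (Fin n), erProb n p G = 1 := by
  have := er_edges n p ∅ (by simp)
  simpa using this

/-- The two-star edges. -/
def DD {n : ℕ} (u x : Fin n) (T : Finset (Fin n)) : Finset (Sym2 (Fin n)) :=
  T.image (fun w => s(u, w)) ∪ T.image (fun w => s(x, w))

lemma DD_card {n : ℕ} (u x : Fin n) (hux : u ≠ x) (T : Finset (Fin n)) (hu : u ∉ T) (hx : x ∉ T) :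
    (DD u x T).card = 2 * T.card := by
  unfold DD
  rw [Finset.card_union_of_disjoint, Finset.card_image_of_injective, Finset.card_image_of_injective]
  · ring
  · intro a b h; exact Sym2.congr_right.1 h
  · intro a b h; exact Sym2.congr_right.1 h
  · rw [Finset.disjoint_left]
    intro e he he'
    rw [Finset.mem_image] at he he'
    obtain ⟨a, ha, rfl⟩ := he
    obtain ⟨b, hb, h⟩ := he'
    rw [Sym2.eq_iff] at h
    rcases h with ⟨h1, _⟩ | ⟨h1, _⟩
    · exact hux h1.symm
    · exact hx (h1 ▸ ha)

lemma DD_sub {n : ℕ} (u x : Fin n) (T : Finset (Fin n)) (G : SimpleGraph (Fin n))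
    [Fintype G.edgeSet] :
    DD u x T ⊆ G.edgeFinset ↔ ∀ w ∈ T, w ∈ nb G u ∩ nb G x := by
  unfold DD
  rw [Finset.union_subset_iff, Finset.image_subset_iff, Finset.image_subset_iff]
  simp only [SimpleGraph.mem_edgeFinset, SimpleGraph.mem_edgeSet, Finset.mem_inter, mem_nb]
  constructor
  · rintro ⟨a, b⟩ w hw; exact ⟨a w hw, b w hw⟩
  · intro h; exact ⟨fun w hw => (h w hw).1, fun w hw => (h w hw).2⟩

lemma er_moment (n : ℕ) (p a : ℝ) (u x : Fin n) (hux : u ≠ x) :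
    ∑ G : SimpleGraph (Fin n), erProb n p G * (1 - a) ^ (nb G u ∩ nb G x).card =
      (1 - a * p ^ 2) ^ (n - 2) := by
  set W : Finset (Fin n) := Finset.univ \ {u, x} with hW
  have hWc : W.card = n - 2 := by
    rw [hW, Finset.card_sdiff_of_subset (Finset.subset_univ _), Finset.card_univ, Fintype.card_fin,
      Finset.card_pair hux]
  have huW : u ∉ W := by simp [hW]
  have hxW : x ∉ W := by simp [hW]
  have e1 : ∀ G : SimpleGraph (Fin n), (1 - a) ^ (nb G u ∩ nb G x).card =
      ∑ T ∈ W.powerset, (-a) ^ T.card * (if DD u x T ⊆ G.edgeFinset then 1 else 0) := by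
    intro G
    have hsub : nb G u ∩ nb G x ⊆ W := by
      intro w hw
      rw [Finset.mem_inter, mem_nb, mem_nb] at hw
      simp only [hW, Finset.mem_sdiff, Finset.mem_univ, true_and, Finset.mem_insert,
        Finset.mem_singleton, not_or]
      exact ⟨hw.1.ne', hw.2.ne'⟩
    have h1 : (1 - a) ^ (nb G u ∩ nb G x).card =
        ∏ w ∈ W, (1 + if w ∈ nb G u ∩ nb G x then -a else 0) := by
      rw [← Finset.prod_const]
      rw [← Finset.prod_subset hsub]
      · refine Finset.prod_congr rfl fun w hw => ?_
        rw [if_pos hw]; ring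
      · intro w _ hw
        rw [if_neg hw]; ring
    rw [h1, Finset.prod_one_add]
    refine Finset.sum_congr rfl fun T _ => ?_
    split_ifs with h
    · rw [DD_sub] at h
      rw [mul_one, ← Finset.prod_const]
      exact Finset.prod_congr rfl fun w hw => if_pos (h w hw)
    · rw [DD_sub] at h
      push Not at h
      obtain ⟨w, hw, hw'⟩ := h
      rw [mul_zero]
      exact Finset.prod_eq_zero hw (if_neg hw')
  calc _ = ∑ T ∈ W.powerset, (-a) ^ T.card *
        ∑ G : SimpleGraph (Fin n), erProb n p G * (if DD u x T ⊆ G.edgeFinset then 1 else 0) := by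
        simp_rw [e1, Finset.mul_sum]
        rw [Finset.sum_comm]
        refine Finset.sum_congr rfl fun T _ => Finset.sum_congr rfl fun G _ => ?_
        ring
    _ = ∑ T ∈ W.powerset, ∏ w ∈ T, (-(a * p ^ 2)) := by
        refine Finset.sum_congr rfl fun T hT => ?_
        rw [Finset.mem_powerset] at hT
        have hu : u ∉ T := fun h => huW (hT h)
        have hx : x ∉ T := fun h => hxW (hT h)
        rw [er_edges, DD_card u x hux T hu hx, Finset.prod_const, pow_mul, ← mul_pow]
        · congr 1; ring
        · rw [DD_sub]
          intro w hw
          rw [Finset.mem_inter, mem_nb, mem_nb]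
          exact ⟨fun e => hu (e ▸ hw), fun e => hx (e ▸ hw)⟩
    _ = _ := by
        rw [← Finset.prod_one_add, Finset.prod_const, hWc]
        congr 1

lemma er_codeg (n : ℕ) (p : ℝ) (h0 : 0 ≤ p) (h1 : p ≤ 1) (u x : Fin n) (hux : u ≠ x)
    (hn : 2 ≤ n) :
    ∑ G : SimpleGraph (Fin n), erProb n p G *
      (if ((nb G u ∩ nb G x).card : ℝ) < (p ^ 2 * ((n : ℝ) - 2)) / 4 then 1 else 0) ≤
      Real.exp (-(3 / 8) * (p ^ 2 * ((n : ℝ) - 2))) := by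
  set m : ℝ := p ^ 2 * ((n : ℝ) - 2) with hm
  have hp2 : p ^ 2 ≤ 1 := pow_le_one₀ h0 h1
  calc _ ≤ ∑ G : SimpleGraph (Fin n), erProb n p G *
        (Real.exp (m / 4) * Real.exp (-1) ^ (nb G u ∩ nb G x).card) :=
        Finset.sum_le_sum fun G _ => mul_le_mul_of_nonneg_left (ind_le_exp _ _)
          (erProb_nonneg n p h0 h1 G)
    _ = Real.exp (m / 4) * (1 - (1 - Real.exp (-1)) * p ^ 2) ^ (n - 2) := by
        rw [← er_moment n p _ u x hux, Finset.mul_sum]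
        refine Finset.sum_congr rfl fun G _ => ?_
        rw [sub_sub_cancel]; ring
    _ ≤ Real.exp (m / 4) * Real.exp (-(5 / 8) * p ^ 2) ^ (n - 2) := by
        have a1 := exp_neg_one_le
        have a2 := Real.exp_pos (-1)
        have a3 := Real.add_one_le_exp (-(5 / 8) * p ^ 2)
        have a4 := sq_nonneg p
        gcongr
        · nlinarith
        · nlinarith
    _ = _ := by
        rw [← Real.exp_nat_mul, ← Real.exp_add, Nat.cast_sub hn, hm]
        congr 1
        push_cast
        ring

lemma er_good (n : ℕ) (p : ℝ) (h0 : 0 ≤ p) (h1 : p ≤ 1) (hn : 4 ≤ n) :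
    ∑ G : SimpleGraph (Fin n), erProb n p G * (if Good G (p ^ 2 / 8) then 0 else 1) ≤
      (n : ℝ) ^ 2 * Real.exp (-(3 / 8) * (p ^ 2 * ((n : ℝ) - 2))) := by
  set m : ℝ := p ^ 2 * ((n : ℝ) - 2) with hm
  have hn' : (4 : ℝ) ≤ n := by exact_mod_cast hn
  have hp2 : 0 ≤ p ^ 2 := sq_nonneg p
  have key : ∀ G : SimpleGraph (Fin n), (if Good G (p ^ 2 / 8) then (0 : ℝ) else 1) ≤
      ∑ q : Fin n × Fin n, if (q.1 ≠ q.2 ∧ ((nb G q.1 ∩ nb G q.2).card : ℝ) < m / 4)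
        then (1 : ℝ) else 0 := by
    intro G
    refine ind_exists_le (fun q : Fin n × Fin n =>
      (q.1 ≠ q.2 ∧ ((nb G q.1 ∩ nb G q.2).card : ℝ) < m / 4)) _ fun h => ?_
    by_contra hcon
    push Not at hcon
    apply h
    have hne : ∀ u x, u ≠ x → p ^ 2 / 8 * n ≤ ((nb G u ∩ nb G x).card : ℝ) := by
      intro u x hux
      have := hcon (u, x) hux
      refine le_trans ?_ this
      rw [hm]
      nlinarith
    intro u x
    rw [Fintype.card_fin]
    by_cases hux : u = x
    · subst hux
      have : Nontrivial (Fin n) := Fin.nontrivial_iff_two_le.2 (by omega)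
      obtain ⟨y, hy⟩ := exists_ne u
      refine (hne u y hy.symm).trans ?_
      rw [Finset.inter_self]
      exact_mod_cast Finset.card_le_card Finset.inter_subset_left
    · exact hne u x hux
  calc _ ≤ ∑ G : SimpleGraph (Fin n), erProb n p G * ∑ q : Fin n × Fin n,
        if (q.1 ≠ q.2 ∧ ((nb G q.1 ∩ nb G q.2).card : ℝ) < m / 4) then (1 : ℝ) else 0 :=
        Finset.sum_le_sum fun G _ => mul_le_mul_of_nonneg_left (key G) (erProb_nonneg n p h0 h1 G)
    _ = ∑ q : Fin n × Fin n, ∑ G : SimpleGraph (Fin n), erProb n p G *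
        if (q.1 ≠ q.2 ∧ ((nb G q.1 ∩ nb G q.2).card : ℝ) < m / 4) then (1 : ℝ) else 0 := by
        simp_rw [Finset.mul_sum]
        rw [Finset.sum_comm]
    _ ≤ ∑ q : Fin n × Fin n, Real.exp (-(3 / 8) * m) := by
        refine Finset.sum_le_sum fun q _ => ?_
        by_cases hq : q.1 = q.2
        · simp only [hq, ne_eq, not_true_eq_false, false_and, if_false, mul_zero,
            Finset.sum_const_zero]
          positivity
        · refine le_trans (le_of_eq ?_) (er_codeg n p h0 h1 q.1 q.2 hq (by omega))
          refine Finset.sum_congr rfl fun G _ => ?_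
          simp [hq, hm]
    _ = _ := by simp [sq]

lemma pr_upper (n : ℕ) (p : ℝ) (h0 : 0 < p) (h1 : p ≤ 1) (hn : 4 ≤ n) (v : Fin n) (y0 : ℝ)
    (hy0 : 2 ≤ y0) (hK : 128 * y0 ≤ (p ^ 2 / 8) ^ 3 * n)
    (t1 t2 : ℕ) (ht2 : (n : ℝ) ≤ 2 ^ (2 ^ t2)) :
    1 - prPZFwithin n p v (t1 + t2 + 2) ≤
      (n : ℝ) ^ 2 * Real.exp (-(3 / 8) * (p ^ 2 * ((n : ℝ) - 2))) +
      (64 * y0 / (p ^ 2 / 8) ^ 2 * (56 / 57) ^ t1 + 6 * t2 / y0 +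
      (n * Real.exp (-((p ^ 2 / 8) * n / 8)) +
      n * Real.exp (-((p ^ 2 / 8) ^ 2 * n / 64)))) := by
  set c := p ^ 2 / 8 with hc
  have hc0 : 0 < c := by positivity
  have hc1 : c ≤ 1 := by
    have : p ^ 2 ≤ 1 := pow_le_one₀ h0.le h1
    rw [hc]; linarith
  set R := 64 * y0 / c ^ 2 * (56 / 57) ^ t1 + 6 * t2 / y0 +
      (n * Real.exp (-(c * n / 8)) + n * Real.exp (-(c ^ 2 * n / 64))) with hR
  have hR0 : 0 ≤ R := by positivity
  have e : 1 - prPZFwithin n p v (t1 + t2 + 2) =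
      ∑ G : SimpleGraph (Fin n), erProb n p G * (1 - probAllBlue G {v} (t1 + t2 + 2)) := by
    simp_rw [mul_sub, mul_one, Finset.sum_sub_distrib, er_total]
    rfl
  rw [e]
  calc _ ≤ ∑ G : SimpleGraph (Fin n), erProb n p G * ((if Good G c then 0 else 1) + R) := by
        refine Finset.sum_le_sum fun G _ => mul_le_mul_of_nonneg_left ?_
          (erProb_nonneg n p h0.le h1 G)
        split_ifs with hG
        · have := upper_det G v c hc0 hG y0 hy0 (by rwa [Fintype.card_fin]) hc1 t1 t2
            (by rwa [Fintype.card_fin])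
          rw [Fintype.card_fin] at this
          linarith
        · linarith [probAllBlue_nonneg G {v} (t1 + t2 + 2)]
    _ = ∑ G : SimpleGraph (Fin n), erProb n p G * (if Good G c then 0 else 1) + R := by
        simp_rw [mul_add, Finset.sum_add_distrib, ← Finset.sum_mul, er_total, one_mul]
    _ ≤ _ := by
        have := er_good n p h0.le h1 hn
        linarith

lemma pr_lower (n : ℕ) (p : ℝ) (h0 : 0 ≤ p) (h1 : p ≤ 1) (hn : 2 ≤ n) (v : Fin n) (ℓ : ℕ) :
    prPZFwithin n p v ℓ ≤ 2 ^ ℓ / Real.logb 2 n := by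
  calc _ ≤ ∑ G : SimpleGraph (Fin n), erProb n p G * (2 ^ ℓ / Real.logb 2 n) := by
        refine Finset.sum_le_sum fun G _ => mul_le_mul_of_nonneg_left ?_
          (erProb_nonneg n p h0 h1 G)
        have := probAllBlue_lower G v ℓ (by rwa [Fintype.card_fin])
        rwa [Fintype.card_fin] at this
    _ = _ := by rw [← Finset.sum_mul, er_total, one_mul]

lemma pr_nonneg (n : ℕ) (p : ℝ) (h0 : 0 ≤ p) (h1 : p ≤ 1) (v : Fin n) (ℓ : ℕ) :
    0 ≤ prPZFwithin n p v ℓ :=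
  Finset.sum_nonneg fun G _ => mul_nonneg (erProb_nonneg n p h0 h1 G) (probAllBlue_nonneg G _ ℓ)

lemma pr_le_one (n : ℕ) (p : ℝ) (h0 : 0 ≤ p) (h1 : p ≤ 1) (v : Fin n) (ℓ : ℕ) :
    prPZFwithin n p v ℓ ≤ 1 := by
  rw [← er_total n p]
  exact Finset.sum_le_sum fun G _ => mul_le_of_le_one_right (erProb_nonneg n p h0 h1 G)
    (probAllBlue_le_one G _ ℓ)

lemma pr_mono (n : ℕ) (p : ℝ) (h0 : 0 ≤ p) (h1 : p ≤ 1) (v : Fin n) :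
    Monotone (prPZFwithin n p v) := fun _ _ hab =>
  Finset.sum_le_sum fun G _ => mul_le_mul_of_nonneg_left (probAllBlue_mono G _ hab)
    (erProb_nonneg n p h0 h1 G)


/-- The pointwise upper bound, with all parameters chosen. -/
theorem upper_pointwise (n : ℕ) (p : ℝ) (h0 : 0 < p) (h1 : p ≤ 1) (hn : 4 ≤ n) (v : Fin n)
    (L s : ℝ) (hL : 2 ≤ L) (hLdef : (n : ℝ) ≤ (2:ℝ) ^ ((2:ℝ) ^ L)) (hs : (n : ℝ) = s ^ 2)
    (hs0 : 0 ≤ s)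
    (hps : s ≤ p ^ 6 * n) (hLs : 65536 * L ^ 2 ≤ s) (t1 t2 : ℕ)
    (ht1 : 114 * Real.log (4096 * L ^ 2 / p ^ 4) ≤ t1) (ht2 : L ≤ t2) (ht2' : (t2 : ℝ) ≤ L + 1) :
    1 - prPZFwithin n p v (t1 + t2 + 2) ≤
      3 * (s ^ 4 * Real.exp (-(s / 4096))) + (1 / L ^ 2 + 6 * (L + 1) / L ^ 2) := by
  have hn4 : (4 : ℝ) ≤ n := by exact_mod_cast hn
  have hp2 : p ^ 6 ≤ p ^ 2 := pow_le_pow_of_le_one h0.le h1 (by norm_num)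
  have hp4 : p ^ 6 ≤ p ^ 4 := pow_le_pow_of_le_one h0.le h1 (by norm_num)
  have h2s : s ≤ p ^ 2 * n := hps.trans (by gcongr)
  have h4s : s ≤ p ^ 4 * n := hps.trans (by gcongr)
  have hup := pr_upper n p h0 h1 hn v (L ^ 2) (by nlinarith) (by nlinarith) t1 t2 (by
    refine hLdef.trans ?_
    rw [← Real.rpow_natCast 2 (2 ^ t2)]
    apply Real.rpow_le_rpow_of_exponent_le (by norm_num)
    push_cast
    rw [← Real.rpow_natCast 2 t2]
    exact Real.rpow_le_rpow_of_exponent_le (by norm_num) ht2)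
  refine hup.trans ?_
  have hn2 : (n : ℝ) ≤ (n:ℝ) ^ 2 := by nlinarith
  have hs4 : (n:ℝ) ^ 2 = s ^ 4 := by rw [hs]; ring
  have e1 : (n:ℝ)^2 * Real.exp (-(3/8) * (p^2 * ((n:ℝ) - 2))) ≤ s ^ 4 * Real.exp (-(s / 4096)) := by
    rw [← hs4]
    gcongr
    nlinarith [mul_le_mul_of_nonneg_left (show (n:ℝ)/2 ≤ n - 2 by linarith) (sq_nonneg p)]
  have e2 : n * Real.exp (-((p^2/8) * n / 8)) ≤ s ^ 4 * Real.exp (-(s / 4096)) := by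
    rw [← hs4]
    refine mul_le_mul hn2 (Real.exp_le_exp.2 ?_) (Real.exp_pos _).le (by positivity)
    linarith
  have e3 : n * Real.exp (-((p^2/8)^2 * n / 64)) ≤ s ^ 4 * Real.exp (-(s / 4096)) := by
    rw [← hs4]
    refine mul_le_mul hn2 (Real.exp_le_exp.2 ?_) (Real.exp_pos _).le (by positivity)
    have : (p^2/8)^2 * n / 64 = p^4 * n / 4096 := by ring
    rw [this]; linarith
  have e4 : 6 * (t2:ℝ) / L ^ 2 ≤ 6 * (L + 1) / L ^ 2 := by gcongr
  have hp4' : p ^ 4 ≤ 1 := pow_le_one₀ h0.le h1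
  have hp40 : 0 < p ^ 4 := by positivity
  have hK : L ^ 2 ≤ 4096 * L ^ 2 / p ^ 4 := by
    rw [le_div_iff₀ hp40]; nlinarith [sq_nonneg L]
  have e5 : 64 * L ^ 2 / (p^2/8)^2 * (56/57)^t1 ≤ 1 / L ^ 2 := by
    have : 64 * L ^ 2 / (p^2/8)^2 = 4096 * L ^ 2 / p ^ 4 := by
      field_simp; norm_num
    rw [this]
    set K := 4096 * L ^ 2 / p ^ 4 with hKd
    have hK0 : 0 < K := by positivity
    have a1 : ((56:ℝ)/57)^t1 ≤ Real.exp (-(2 * Real.log K)) := by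
      calc ((56:ℝ)/57)^t1 ≤ (Real.exp (-(1/57)))^t1 := by
            gcongr
            have := Real.add_one_le_exp (-(1/57 : ℝ))
            linarith
        _ = Real.exp (t1 * (-(1/57))) := by rw [← Real.exp_nat_mul]
        _ ≤ _ := by gcongr; linarith
    have a2 : Real.exp (-(2 * Real.log K)) = 1 / K ^ 2 := by
      rw [Real.exp_neg, two_mul, Real.exp_add, Real.exp_log hK0]; field_simp
    calc K * (56/57)^t1 ≤ K * (1 / K ^ 2) := by rw [← a2]; gcongr
      _ = 1 / K := by field_simp
      _ ≤ 1 / L ^ 2 := by gcongr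
  linarith

theorem lower_pointwise (n : ℕ) (p : ℝ) (h0 : 0 ≤ p) (h1 : p ≤ 1) (hn : 2 ≤ n) (v : Fin n)
    (L e : ℝ) (hL : 0 < L) (hLdef : Real.logb 2 n = (2:ℝ) ^ L) (he : e ≤ 1) (he2 : Real.sqrt L ≤ e * L) :
    prPZFwithin n p v (⌈(1 - e) * L⌉₊ - 1) ≤ (2:ℝ) ^ (-Real.sqrt L) := by
  refine (pr_lower n p h0 h1 hn v _).trans ?_
  rw [hLdef, ← Real.rpow_natCast, ← Real.rpow_sub (by norm_num)]
  apply Real.rpow_le_rpow_of_exponent_le (by norm_num)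
  have h3 : 0 ≤ (1 - e) * L := mul_nonneg (by linarith) hL.le
  have h4 : ((⌈(1 - e) * L⌉₊ - 1 : ℕ) : ℝ) ≤ (1 - e) * L := by
    rcases Nat.eq_zero_or_pos ⌈(1 - e) * L⌉₊ with h | h
    · rw [h]; simpa using h3
    · rw [Nat.cast_sub h]
      have := Nat.ceil_lt_add_one h3
      push_cast; linarith
  linarith

/-- The asymptotic facts about all the parameters. -/
theorem final_asymp
    (p : ℕ → ℝ) (hp : ∀ n, 0 ≤ p n ∧ p n ≤ 1)
    (h : ℕ → ℝ) (hh : Filter.Tendsto h Filter.atTop (nhds 0))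
    (hpoly : ∀ᶠ n in Filter.atTop, p n = Real.log n ^ (-(h n)))
    (v : (n : ℕ) → Fin (n + 1)) :
    ∃ e : ℕ → ℝ,
      Filter.Tendsto e Filter.atTop (nhds 0) ∧
      Filter.Tendsto
        (fun n => PZF.prPZFwithin (n + 1) (p (n + 1)) (v n)
          ⌊(1 + e n) * Real.logb 2 (Real.logb 2 ((n : ℝ) + 1))⌋₊)
        Filter.atTop (nhds 1) ∧
      Filter.Tendsto
        (fun n => PZF.prPZFwithin (n + 1) (p (n + 1)) (v n)
          (⌈(1 - e n) * Real.logb 2 (Real.logb 2 ((n : ℝ) + 1))⌉₊ - 1))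
        Filter.atTop (nhds 0) := by
  have hX : Filter.Tendsto (fun n : ℕ => (n : ℝ) + 1) Filter.atTop Filter.atTop :=
    Filter.tendsto_atTop_add_const_right _ _ tendsto_natCast_atTop_atTop
  have hlogb : Filter.Tendsto (fun n : ℕ => Real.logb 2 ((n : ℝ) + 1)) Filter.atTop Filter.atTop :=
    (Real.tendsto_logb_atTop (by norm_num)).comp hX
  set L : ℕ → ℝ := fun n => Real.logb 2 (Real.logb 2 ((n : ℝ) + 1)) with hLd
  have hL : Filter.Tendsto L Filter.atTop Filter.atTop :=
    (Real.tendsto_logb_atTop (by norm_num)).comp hlogb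
  set s : ℕ → ℝ := fun n => Real.sqrt ((n : ℝ) + 1) with hsd
  have hs : Filter.Tendsto s Filter.atTop Filter.atTop := Real.tendsto_sqrt_atTop.comp hX
  have hlog : Filter.Tendsto (fun n : ℕ => Real.log ((n : ℝ) + 1)) Filter.atTop Filter.atTop :=
    Real.tendsto_log_atTop.comp hX
  have hH : Filter.Tendsto (fun n => h (n + 1)) Filter.atTop (nhds 0) :=
    hh.comp (Filter.tendsto_add_atTop_nat 1)
  have hP : ∀ᶠ n : ℕ in Filter.atTop, p (n + 1) = Real.log ((n : ℝ) + 1) ^ (-(h (n + 1))) := by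
    have := (Filter.tendsto_add_atTop_nat 1).eventually hpoly
    filter_upwards [this] with n hn
    rw [hn]; push_cast; rfl
  have hH1 : ∀ᶠ n : ℕ in Filter.atTop, h (n + 1) ≤ 1 := hH.eventually_le_const (by norm_num)
  -- `p ≥ 1 / log X`
  have hPl : ∀ᶠ n : ℕ in Filter.atTop, 1 / Real.log ((n : ℝ) + 1) ≤ p (n + 1) := by
    filter_upwards [hP, hH1, hlog.eventually_ge_atTop 1] with n h1 h2 h3
    rw [h1, one_div, ← Real.rpow_neg_one]
    exact Real.rpow_le_rpow_of_exponent_le h3 (by linarith)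
  have hP0 : ∀ᶠ n : ℕ in Filter.atTop, 0 < p (n + 1) := by
    filter_upwards [hPl, hlog.eventually_ge_atTop 1] with n h1 h3
    exact lt_of_lt_of_le (by positivity) h1
  have hlogs : ∀ n : ℕ, Real.log ((n : ℝ) + 1) = 2 * Real.log (s n) := by
    intro n
    simp only [hsd]
    rw [Real.log_sqrt (by positivity)]; ring
  have hs2 : ∀ n : ℕ, ((n : ℝ) + 1) = s n ^ 2 := by
    intro n
    simp only [hsd]
    rw [Real.sq_sqrt (by positivity)]
  -- powers of the logarithm are negligible
  have hpowlog : ∀ k : ℕ, ∀ c : ℝ, 0 < c →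
      ∀ᶠ n : ℕ in Filter.atTop, Real.log ((n : ℝ) + 1) ^ k ≤ c * s n := by
    intro k c hc
    have h1 := (Real.isLittleO_pow_log_id_atTop (n := k)).comp_tendsto hs
    have h2 := h1.bound (show 0 < c / 2 ^ k by positivity)
    filter_upwards [h2, hs.eventually_ge_atTop 1] with n h3 h4
    rw [hlogs, mul_pow]
    simp only [Function.comp, id, Real.norm_eq_abs] at h3
    rw [abs_of_nonneg (show 0 ≤ s n by linarith)] at h3
    calc (2:ℝ) ^ k * Real.log (s n) ^ k ≤ 2 ^ k * (c / 2 ^ k * s n) := by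
          gcongr; exact (le_abs_self _).trans h3
      _ = c * s n := by field_simp
  have hps : ∀ᶠ n : ℕ in Filter.atTop, s n ≤ p (n + 1) ^ 6 * ((n : ℝ) + 1) := by
    filter_upwards [hPl, hlog.eventually_ge_atTop 1, hpowlog 6 1 one_pos,
      hs.eventually_ge_atTop 1] with n h1 h2 h3 h4
    have h5 : 1 / Real.log ((n : ℝ) + 1) ^ 6 ≤ p (n + 1) ^ 6 := by
      rw [← one_div_pow]; gcongr
    have h6 : 0 < Real.log ((n : ℝ) + 1) ^ 6 := by positivity
    calc s n ≤ 1 / Real.log ((n : ℝ) + 1) ^ 6 * ((n : ℝ) + 1) := by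
          rw [div_mul_eq_mul_div, le_div_iff₀ h6, one_mul]
          calc s n * Real.log ((n : ℝ) + 1) ^ 6 ≤ s n * (1 * s n) := by gcongr
            _ = (n : ℝ) + 1 := by rw [hs2]; ring
      _ ≤ _ := by gcongr
  have hLl : ∀ᶠ n : ℕ in Filter.atTop, L n ≤ 2 * Real.log ((n : ℝ) + 1) := by
    filter_upwards [hlogb.eventually_ge_atTop 1, hlog.eventually_ge_atTop 1] with n h1 h2
    have l2 : (1:ℝ)/2 < Real.log 2 := by linarith [Real.log_two_gt_d9]
    have h3 : Real.logb 2 ((n : ℝ) + 1) ≤ 2 * Real.log ((n : ℝ) + 1) := by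
      rw [Real.logb, div_le_iff₀ (by linarith)]
      nlinarith
    refine le_trans ?_ h3
    simp only [hLd]
    rw [Real.logb_le_iff_le_rpow (by norm_num) (by linarith)]
    have := Real.rpow_natCast 2 0
    have h5 := one_add_mul_self_le_rpow_one_add (s := 1) (by norm_num) h1
    norm_num at h5
    linarith
  have hLs : ∀ᶠ n : ℕ in Filter.atTop, 65536 * L n ^ 2 ≤ s n := by
    filter_upwards [hLl, hL.eventually_ge_atTop 0, hpowlog 2 (1 / (65536 * 4)) (by norm_num)]
      with n h1 h2 h3
    have : L n ^ 2 ≤ (2 * Real.log ((n : ℝ) + 1)) ^ 2 := by gcongr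
    nlinarith
  have hrp : ∀ᶠ n : ℕ in Filter.atTop, Real.logb 2 ((n : ℝ) + 1) = (2:ℝ) ^ L n := by
    filter_upwards [hlogb.eventually_ge_atTop 1] with n h1
    simp only [hLd]
    rw [Real.rpow_logb (by norm_num) (by norm_num) (by linarith)]
  -- the parameters
  set K : ℕ → ℝ := fun n => 4096 * L n ^ 2 / p (n + 1) ^ 4 with hKd
  set t1 : ℕ → ℕ := fun n => ⌈114 * Real.log (K n)⌉₊ with ht1d
  have hlogL : Filter.Tendsto (fun n => Real.log (L n) / L n) Filter.atTop (nhds 0) :=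
    (Real.isLittleO_log_id_atTop.tendsto_div_nhds_zero).comp hL
  have hcL : ∀ c : ℝ, Filter.Tendsto (fun n => c / L n) Filter.atTop (nhds 0) :=
    fun c => hL.const_div_atTop c
  have hK : Filter.Tendsto (fun n => Real.log (K n) / L n) Filter.atTop (nhds 0) := by
    have h1 : Filter.Tendsto (fun n => Real.log 4096 / L n + 2 * (Real.log (L n) / L n) +
        4 * h (n + 1) * (Real.log 2 + Real.log (Real.log 2) / L n)) Filter.atTop
        (nhds (0 + 2 * 0 + 4 * 0 * (Real.log 2 + 0))) :=
      ((hcL _).add (hlogL.const_mul 2)).add ((hH.const_mul 4).mul ((hcL _).const_add _))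
    have h0 : (0 + 2 * 0 + 4 * 0 * (Real.log 2 + 0) : ℝ) = 0 := by ring
    rw [h0] at h1
    refine h1.congr' ?_
    filter_upwards [hP, hL.eventually_ge_atTop 1, hlog.eventually_ge_atTop 1, hP0] with n a1 a2 a3 a4
    have b1 : Real.log (p (n + 1)) = -(h (n + 1)) * Real.log (Real.log ((n : ℝ) + 1)) := by
      rw [a1, Real.log_rpow (by linarith)]
    have l2 : 0 < Real.log 2 := Real.log_pos (by norm_num)
    have b2 : Real.log (Real.log ((n : ℝ) + 1)) = L n * Real.log 2 + Real.log (Real.log 2) := by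
      simp only [hLd]
      rw [Real.logb, div_mul_cancel₀ _ l2.ne', Real.logb, Real.log_div (by linarith) l2.ne']
      ring
    simp only [hKd]
    rw [Real.log_div (by positivity) (by positivity), Real.log_mul (by norm_num) (by positivity),
      Real.log_pow, Real.log_pow, b1, b2]
    have : L n ≠ 0 := by linarith
    field_simp
    push_cast
    ring
  have hK1 : ∀ᶠ n : ℕ in Filter.atTop, 0 ≤ Real.log (K n) := by
    filter_upwards [hL.eventually_ge_atTop 1, hP0] with n a2 a4
    apply Real.log_nonneg
    simp only [hKd]
    have : p (n + 1) ^ 4 ≤ 1 := pow_le_one₀ a4.le (hp _).2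
    rw [le_div_iff₀ (by positivity)]
    nlinarith
  have ht1 : Filter.Tendsto (fun n => (t1 n : ℝ) / L n) Filter.atTop (nhds 0) := by
    have h1 : Filter.Tendsto (fun n => 114 * (Real.log (K n) / L n) + 1 / L n) Filter.atTop
        (nhds (114 * 0 + 0)) := (hK.const_mul 114).add (hcL 1)
    rw [mul_zero, add_zero] at h1
    refine squeeze_zero' ?_ ?_ h1
    · filter_upwards [hL.eventually_ge_atTop 1] with n a1
      positivity
    · filter_upwards [hL.eventually_ge_atTop 1, hK1] with n a1 a2
      have := Nat.ceil_lt_add_one (show 0 ≤ 114 * Real.log (K n) by positivity)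
      rw [← mul_div_assoc, ← add_div]
      gcongr
  set e : ℕ → ℝ := fun n => (t1 n : ℝ) / L n + 4 / L n + 1 / Real.sqrt (L n) with hed
  have hsL : Filter.Tendsto (fun n => Real.sqrt (L n)) Filter.atTop Filter.atTop :=
    Real.tendsto_sqrt_atTop.comp hL
  have he : Filter.Tendsto e Filter.atTop (nhds 0) := by
    have := (ht1.add (hcL 4)).add (hsL.const_div_atTop 1)
    rw [add_zero, add_zero] at this
    exact this
  have heL : ∀ᶠ n : ℕ in Filter.atTop, e n * L n = t1 n + 4 + Real.sqrt (L n) := by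
    filter_upwards [hL.eventually_ge_atTop 1] with n a1
    simp only [hed]
    have h1 : 0 < Real.sqrt (L n) := Real.sqrt_pos.2 (by linarith)
    have h2 : 1 / Real.sqrt (L n) * L n = Real.sqrt (L n) := by
      rw [div_mul_eq_mul_div, one_mul, Real.div_sqrt]
    rw [add_mul, add_mul, h2, div_mul_cancel₀ _ (by linarith), div_mul_cancel₀ _ (by linarith)]
  refine ⟨e, he, ?_, ?_⟩
  · -- upper bound
    have hB : Filter.Tendsto (fun n => 1 - (3 * (s n ^ 4 * Real.exp (-(s n / 4096))) +
        (1 / L n ^ 2 + 6 * (L n + 1) / L n ^ 2))) Filter.atTop (nhds 1) := by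
      have b1 : Filter.Tendsto (fun n => s n ^ 4 * Real.exp (-(s n / 4096))) Filter.atTop
          (nhds 0) := by
        have c1 := (Real.tendsto_pow_mul_exp_neg_atTop_nhds_zero 4).comp
          (hs.atTop_div_const (show (0:ℝ) < 4096 by norm_num))
        have c2 := c1.const_mul ((4096:ℝ) ^ 4)
        rw [mul_zero] at c2
        refine c2.congr fun n => ?_
        simp only [Function.comp]
        rw [← mul_assoc, ← mul_pow]
        congr 2
        field_simp
      have b2 : Filter.Tendsto (fun n => 7 * (1 / L n * (1 / L n)) + 6 * (1 / L n)) Filter.atTop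
          (nhds (7 * (0 * 0) + 6 * 0)) :=
        (((hcL 1).mul (hcL 1)).const_mul 7).add ((hcL 1).const_mul 6)
      have b3 : Filter.Tendsto (fun n => 1 / L n ^ 2 + 6 * (L n + 1) / L n ^ 2) Filter.atTop
          (nhds 0) := by
        have : (7 * (0 * 0) + 6 * 0 : ℝ) = 0 := by ring
        rw [this] at b2
        refine b2.congr' ?_
        filter_upwards [hL.eventually_ge_atTop 1] with n a1
        have : L n ≠ 0 := by linarith
        field_simp
        ring
      have := ((b1.const_mul 3).add b3).const_sub 1
      simpa using this
    refine tendsto_of_tendsto_of_tendsto_of_le_of_le' hB tendsto_const_nhds ?_ ?_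
    · filter_upwards [hP0, hL.eventually_ge_atTop 2, hps, hLs, hrp, heL,
        Filter.eventually_ge_atTop 3] with n a1 a2 a3 a4 a5 a6 a7
      have hceil := Nat.ceil_lt_add_one (show 0 ≤ L n by linarith)
      have hx : (((n + 1 : ℕ)) : ℝ) = (n : ℝ) + 1 := by push_cast; rfl
      have hu := upper_pointwise (n + 1) (p (n + 1)) a1 (hp _).2 (by omega) (v n) (L n) (s n) a2
        (by rw [hx, ← a5, Real.rpow_logb (by norm_num) (by norm_num) (by positivity)])
        (by rw [hx]; exact hs2 n) (Real.sqrt_nonneg _) (by rw [hx]; exact a3) a4 (t1 n) ⌈L n⌉₊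
        (Nat.le_ceil _) (Nat.le_ceil _) hceil.le
      have hm : prPZFwithin (n + 1) (p (n + 1)) (v n) (t1 n + ⌈L n⌉₊ + 2) ≤
          prPZFwithin (n + 1) (p (n + 1)) (v n) ⌊(1 + e n) * L n⌋₊ := by
        apply pr_mono _ _ (hp _).1 (hp _).2
        apply Nat.le_floor
        push_cast
        have := Real.sqrt_nonneg (L n)
        rw [add_mul, a6]
        linarith
      linarith
    · exact Filter.Eventually.of_forall fun n => pr_le_one _ _ (hp _).1 (hp _).2 _ _
  · have hB : Filter.Tendsto (fun n => (2:ℝ) ^ (-Real.sqrt (L n))) Filter.atTop (nhds 0) := by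
      have c1 := (Real.tendsto_exp_neg_atTop_nhds_zero).comp
        (hsL.const_mul_atTop (Real.log_pos (show (1:ℝ) < 2 by norm_num)))
      refine c1.congr fun n => ?_
      simp only [Function.comp]
      rw [Real.rpow_def_of_pos (by norm_num)]
      congr 1; ring
    refine squeeze_zero' (Filter.Eventually.of_forall fun n =>
      pr_nonneg _ _ (hp _).1 (hp _).2 _ _) ?_ hB
    filter_upwards [hL.eventually_ge_atTop 1, hrp, heL, he.eventually_le_const one_pos,
      Filter.eventually_ge_atTop 3] with n a1 a2 a3 a4 a5
    apply lower_pointwise (n + 1) _ (hp _).1 (hp _).2 (by omega) (v n) (L n) (e n) (by linarith)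
      (by push_cast; exact a2) a4
    rw [a3]
    have : (0:ℝ) ≤ t1 n := by positivity
    linarith

end PZF

/-- If `p = (log n)^{-o(1)}` (i.e. `p n = (log n)^{-h n}` with `h → 0`),
then for each vertex `v` of `G(n,p)`, a.a.s. `pt_pzf(G(n,p), v) = (1 + o(1)) log₂ log₂ n`:
a.a.s. `pt ≤ (1 + e n) log₂ log₂ n` and a.a.s. `pt ≥ (1 - e n) log₂ log₂ n` for some
`e → 0`. -/
theorem pzf_asymptotics_dense
    (p : ℕ → ℝ) (hp : ∀ n, 0 ≤ p n ∧ p n ≤ 1)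
    (h : ℕ → ℝ) (hh : Tendsto h atTop (nhds 0))
    (hpoly : ∀ᶠ n in atTop, p n = Real.log n ^ (-(h n)))
    (v : (n : ℕ) → Fin (n + 1)) :
    ∃ e : ℕ → ℝ,
      Tendsto e atTop (nhds 0) ∧
      Tendsto
        (fun n => PZF.prPZFwithin (n + 1) (p (n + 1)) (v n)
          ⌊(1 + e n) * Real.logb 2 (Real.logb 2 ((n : ℝ) + 1))⌋₊)
        atTop (nhds 1) ∧
      Tendsto
        (fun n => PZF.prPZFwithin (n + 1) (p (n + 1)) (v n)
          (⌈(1 - e n) * Real.logb 2 (Real.logb 2 ((n : ℝ) + 1))⌉₊ - 1))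
        atTop (nhds 0) := by
  exact PZF.final_asymp p hp h hh hpoly v
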